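/- Suppose ∂_u f(t,u) is locally Lipschitz continuous in u uniformly with respect to t. Let p₋ < p₊ be two elements of X_per such that for each a ∈ (p₋(0), p₊(0)), the sequence m ↦ h(t+mT; a) is increasing in m and converges to p₊(t) as m → ∞ locally uniformly in t ∈ ℝ. Then there exists R₀ > 0 such that for every R ≥ R₀, the Dirichlet periodic-parabolic problem admits a symmetrically decreasing solution φ: namely, φ : [−R,R] × ℝ → ℝ satisfies φ_t = φ_xx + f(t,φ) for −R < x < R and t ∈ ℝ, φ(x, t+T) = φ(x,t) for all x,t, p₋(t) < φ(x,t) < p₊(t) for −R < x < R and all t, φ(±R, t) = p₋(t) for all t, φ(−x,t) = φ(x,t) for all x,t, and ∂_x φ(x,t) < 0 for 0 < x < R and all t. -/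

import Mathlib

open Filter Topology Set MeasureTheory

noncomputable section

/-- `u` satisfies `u_t = u_xx + f(t,u)` for `x ∈ sx`, `t ∈ st`
(with the required differentiability in space and time). -/
def SatPDE (f u : ℝ → ℝ → ℝ) (sx st : Set ℝ) : Prop :=
  ∀ x ∈ sx, ∀ t ∈ st,
    DifferentiableAt ℝ (fun y => u y t) x ∧
    DifferentiableAt ℝ (deriv fun y => u y t) x ∧
    HasDerivAt (fun τ => u x τ) (deriv (deriv fun y => u y t) x + f t (u x t)) t

/-- entire solution of `U_t = U_xx + f(t,U)` on `ℝ × ℝ`. -/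
def EntireSol (f U : ℝ → ℝ → ℝ) : Prop := SatPDE f U Set.univ Set.univ

/-- classical (for `t > 0`) solution of the Cauchy problem with initial datum `u₀`. -/
def CauchySol (f : ℝ → ℝ → ℝ) (u₀ : ℝ → ℝ) (u : ℝ → ℝ → ℝ) : Prop :=
  SatPDE f u Set.univ (Set.Ioi 0) ∧
  ContinuousOn (fun q : ℝ × ℝ => u q.1 q.2) (Set.univ ×ˢ Set.Ioi 0) ∧
  ∀ x, u x 0 = u₀ x

/-- `U` is `T`-periodic in time. -/
def TPer (T : ℝ) (U : ℝ → ℝ → ℝ) : Prop := ∀ x t, U x (t + T) = U x t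

/-- `U` is spatially constant. -/
def SpatConst (U : ℝ → ℝ → ℝ) : Prop := ∀ x y t, U x t = U y t

/-- `U` is symmetrically decreasing with respect to `x₀`. -/
def SymDecr (U : ℝ → ℝ → ℝ) (x₀ : ℝ) : Prop :=
  (∀ x t, U (2 * x₀ - x) t = U x t) ∧ ∀ x t : ℝ, x₀ < x → deriv (fun y => U y t) x < 0

/-- `v` is symmetric with respect to `x₀` and nonincreasing away from `x₀`. -/
def SymNonincr (v : ℝ → ℝ → ℝ) (x₀ : ℝ) : Prop :=
  (∀ x t, v (2 * x₀ - x) t = v x t) ∧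
  (∀ x t : ℝ, x < x₀ → 0 ≤ deriv (fun y => v y t) x) ∧
  (∀ x t : ℝ, x₀ < x → deriv (fun y => v y t) x ≤ 0)

/-- `g` solves the ODE `g' = f(t, g)` on the set `s`. -/
def ODESolOn (f : ℝ → ℝ → ℝ) (g : ℝ → ℝ) (s : Set ℝ) : Prop :=
  ∀ t ∈ s, HasDerivAt g (f t (g t)) t

/-- `p` is a nonnegative `T`-periodic solution of `p' = f(t,p)`. -/
def XPer (T : ℝ) (f : ℝ → ℝ → ℝ) (p : ℝ → ℝ) : Prop :=
  (∀ t, 0 ≤ p t) ∧ (∀ t, p (t + T) = p t) ∧ ODESolOn f p Set.univ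

/-- `p` is the base of `U`, i.e. `U(x,t) → p(t)` as `|x| → ∞`. -/
def HasBase (U : ℝ → ℝ → ℝ) (p : ℝ → ℝ) : Prop :=
  ∀ t, Tendsto (fun x => U x t) atTop (nhds (p t)) ∧
    Tendsto (fun x => U x t) atBot (nhds (p t))

/-- `U` is an ω-limit solution of `u`: an entire solution which is the locally uniform
limit of `u(x, t + kⱼ T)` for some sequence of positive integers `kⱼ → ∞`. -/
def OmegaLimitSol (T : ℝ) (f u U : ℝ → ℝ → ℝ) : Prop :=
  EntireSol f U ∧
  ∃ k : ℕ → ℕ, StrictMono k ∧ (∀ j, 0 < k j) ∧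
    TendstoLocallyUniformly
      (fun j (q : ℝ × ℝ) => u q.1 (q.2 + (k j : ℝ) * T)) (fun q => U q.1 q.2) atTop

/-- `φ` is an ω-limit point of `u`: `u(·, kⱼ T) → φ` in `L^∞_loc(ℝ)`. -/
def OmegaLimitPt (T : ℝ) (u : ℝ → ℝ → ℝ) (φ : ℝ → ℝ) : Prop :=
  ∃ k : ℕ → ℕ, StrictMono k ∧ (∀ j, 0 < k j) ∧
    TendstoLocallyUniformly (fun j x => u x ((k j : ℝ) * T)) φ atTop

/-- the solution `h(·;a)` of `h' = f(t,h)`, `h(0) = a`, is `T`-monotone nondecreasing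
(formulated for every solution with initial value `a`; the solution is unique). -/
def TMonNondecFrom (T : ℝ) (f : ℝ → ℝ → ℝ) (a : ℝ) : Prop :=
  ∀ g : ℝ → ℝ, ODESolOn f g (Set.Ici 0) → g 0 = a → ∀ t : ℝ, 0 ≤ t → g t ≤ g (t + T)

/-- the solution `h(·;a)` is `T`-monotone decreasing. -/
def TMonDecFrom (T : ℝ) (f : ℝ → ℝ → ℝ) (a : ℝ) : Prop :=
  ∀ g : ℝ → ℝ, ODESolOn f g (Set.Ici 0) → g 0 = a → ∀ t : ℝ, 0 ≤ t → g (t + T) < g t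

/-- the solution `h(·;a)` is `T`-monotone nonincreasing. -/
def TMonNonincFrom (T : ℝ) (f : ℝ → ℝ → ℝ) (a : ℝ) : Prop :=
  ∀ g : ℝ → ℝ, ODESolOn f g (Set.Ici 0) → g 0 = a → ∀ t : ℝ, 0 ≤ t → g (t + T) ≤ g t

/-- `p ∈ Y_per`. -/
def YPer (T : ℝ) (f : ℝ → ℝ → ℝ) (p : ℝ → ℝ) : Prop :=
  XPer T f p ∧ ∃ ε > 0, ∀ a ∈ Set.Ioo (p 0) (p 0 + ε), TMonNondecFrom T f a

/-- `p` is linearly stable: `∫₀ᵀ ∂ᵤf(t, p(t)) dt < 0`. -/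
def LinStable (T : ℝ) (f : ℝ → ℝ → ℝ) (p : ℝ → ℝ) : Prop :=
  (∫ t in (0:ℝ)..T, deriv (f t) (p t)) < 0

/-- `p` is stable from above for the ODE `h' = f(t,h)`. -/
def StableFromAbove (f : ℝ → ℝ → ℝ) (p : ℝ → ℝ) : Prop :=
  ∀ ε > 0, ∃ δ > 0, ∀ a ∈ Set.Icc (p 0) (p 0 + δ),
    ∀ g : ℝ → ℝ, ODESolOn f g (Set.Ici 0) → g 0 = a → ∀ t : ℝ, 0 ≤ t → |g t - p t| ≤ ε

/-- `p` is stable from below for the ODE `h' = f(t,h)`. -/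
def StableFromBelow (f : ℝ → ℝ → ℝ) (p : ℝ → ℝ) : Prop :=
  ∀ ε > 0, ∃ δ > 0, ∀ a ∈ Set.Icc (p 0 - δ) (p 0),
    ∀ g : ℝ → ℝ, ODESolOn f g (Set.Ici 0) → g 0 = a → ∀ t : ℝ, 0 ≤ t → |g t - p t| ≤ ε

/-- `Zsc w`: the number of sign changes of `w` on `ℝ` (a value in `ℕ∞`). -/
def Zsc (w : ℝ → ℝ) : ℕ∞ :=
  ⨆ k ∈ {k : ℕ | ∃ x : Fin (k + 1) → ℝ, StrictMono x ∧
      ∀ i : Fin k, w (x i.castSucc) * w (x i.succ) < 0}, (k : ℕ∞)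



section

/-- frequencies on the circle of length `4 R` -/
def frq (R : ℝ) (n : ℤ) : ℝ := Real.pi / (2 * R) * (n : ℝ)

/-- cosine Fourier coefficients on the circle of length `4 R` -/
def coef (R : ℝ) (F : ℝ → ℝ) (n : ℤ) : ℝ :=
  (1 / (4 * R)) * ∫ x in (-(2 * R))..(-(2 * R) + 4 * R), F x * Real.cos (frq R n * x)

lemma frq_period {R : ℝ} (hR : 0 < R) (n : ℤ) (x : ℝ) :
    Real.cos (frq R n * (x + 4 * R)) = Real.cos (frq R n * x) := by
  have : frq R n * (x + 4 * R) = frq R n * x + n * (2 * Real.pi) := by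
    unfold frq; field_simp; ring
  rw [this, Real.cos_add_int_mul_two_pi]

lemma coef_shift {R : ℝ} (hR : 0 < R) {F : ℝ → ℝ} (hF : Continuous F)
    (hper : ∀ x, F (x + 4 * R) = F x) (n : ℤ) (h : ℝ) :
    coef R (fun x => F (x + h) + F (x - h) - 2 * F x) n
      = coef R F n * (2 * Real.cos (frq R n * h) - 2) := by
  have key : ∀ h : ℝ, ∫ x in (-(2 * R))..(-(2 * R) + 4 * R), F (x + h) * Real.cos (frq R n * x)
      = ∫ x in (-(2 * R))..(-(2 * R) + 4 * R), F x * Real.cos (frq R n * (x - h)) := by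
    intro h
    have h1 : ∀ x, F (x + h) * Real.cos (frq R n * x)
        = (fun y => F y * Real.cos (frq R n * (y - h))) (x + h) := by
      intro x; simp
    simp_rw [h1]
    rw [intervalIntegral.integral_comp_add_right (fun y => F y * Real.cos (frq R n * (y - h)))]
    have hp : Function.Periodic (fun y => F y * Real.cos (frq R n * (y - h))) (4 * R) := by
      intro y
      show F (y + 4 * R) * Real.cos (frq R n * (y + 4 * R - h)) = _
      rw [hper, show y + 4 * R - h = (y - h) + 4 * R by ring, frq_period hR]
    have := hp.intervalIntegral_add_eq (-(2 * R) + h) (-(2 * R))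
    rw [← this]; congr 1; ring
  have k1 := key h
  have k2 := key (-h)
  unfold coef
  have e1 : ∀ x, (F (x + h) + F (x - h) - 2 * F x) * Real.cos (frq R n * x)
      = F (x + h) * Real.cos (frq R n * x) + F (x + -h) * Real.cos (frq R n * x)
        - 2 * (F x * Real.cos (frq R n * x)) := by
    intro x; rw [sub_eq_add_neg x h]; ring
  simp_rw [e1]
  have i1 : ∀ h, IntervalIntegrable (fun x => F (x + h) * Real.cos (frq R n * x)) volume
      (-(2 * R)) (-(2 * R) + 4 * R) := fun h => (by fun_prop : Continuous _).intervalIntegrable _ _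
  have i0 : IntervalIntegrable (fun x => F x * Real.cos (frq R n * x)) volume
      (-(2 * R)) (-(2 * R) + 4 * R) := (by fun_prop : Continuous _).intervalIntegrable _ _
  have i2 : ∀ h, IntervalIntegrable (fun x => F x * Real.cos (frq R n * (x - h))) volume
      (-(2 * R)) (-(2 * R) + 4 * R) := fun h => (by fun_prop : Continuous _).intervalIntegrable _ _
  rw [intervalIntegral.integral_sub ((i1 h).add (i1 (-h))) (i0.const_mul 2),
    intervalIntegral.integral_add (i1 h) (i1 (-h)), k1, k2,
    ← intervalIntegral.integral_add (i2 h) (i2 (-h)), intervalIntegral.integral_const_mul]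
  have e2 : ∀ x, F x * Real.cos (frq R n * (x - h)) + F x * Real.cos (frq R n * (x - -h))
      = (2 * Real.cos (frq R n * h)) * (F x * Real.cos (frq R n * x)) := by
    intro x
    rw [mul_sub, mul_sub, Real.cos_sub, Real.cos_sub, mul_neg, Real.cos_neg, Real.sin_neg]; ring
  simp_rw [e2]
  rw [intervalIntegral.integral_const_mul]; ring

lemma coef_abs_le {R : ℝ} (hR : 0 < R) {F : ℝ → ℝ} {B : ℝ} (hB : ∀ x, |F x| ≤ B) (n : ℤ) :
    |coef R F n| ≤ B := by
  unfold coef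
  have h := intervalIntegral.norm_integral_le_of_norm_le_const (a := -(2 * R))
    (b := -(2 * R) + 4 * R) (f := fun x => F x * Real.cos (frq R n * x)) (C := B) (by
      intro x _
      rw [Real.norm_eq_abs, abs_mul]
      calc |F x| * |Real.cos (frq R n * x)| ≤ |F x| * 1 :=
            mul_le_mul_of_nonneg_left (Real.abs_cos_le_one _) (abs_nonneg _)
        _ ≤ B := by rw [mul_one]; exact hB x)
  rw [Real.norm_eq_abs] at h
  rw [abs_mul, abs_of_pos (by positivity : (0:ℝ) < 1 / (4 * R))]
  have : |(-(2 * R) + 4 * R) - -(2 * R)| = 4 * R := by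
    rw [abs_of_pos] <;> linarith
  rw [this] at h
  calc _ ≤ 1 / (4 * R) * (B * (4 * R)) := mul_le_mul_of_nonneg_left h (by positivity)
    _ = B := by field_simp

/-- odd about `R`, even about `0` -/
structure RSym (R : ℝ) (F : ℝ → ℝ) : Prop where
  even : ∀ x, F (-x) = F x
  odd : ∀ x, F (2 * R - x) = -F x

lemma RSym.per {R : ℝ} {F : ℝ → ℝ} (h : RSym R F) (x : ℝ) : F (x + 4 * R) = F x := by
  have h1 := h.odd (-x)
  have h2 := h.odd (-(x + 2 * R))
  rw [h.even] at h1 h2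
  rw [show 2 * R - -(x + 2 * R) = x + 4 * R by ring] at h2
  rw [show 2 * R - -x = x + 2 * R by ring] at h1
  rw [h2, h1]; ring

lemma RSym.cos_refl {R : ℝ} (hR : 0 < R) (n : ℤ) (x : ℝ) :
    Real.cos (frq R n * (2 * R - x)) = (-1) ^ n * Real.cos (frq R n * x) := by
  have : frq R n * (2 * R - x) = -(frq R n * x - n * Real.pi) := by
    unfold frq; field_simp; ring
  rw [this, Real.cos_neg, Real.cos_sub_int_mul_pi]

lemma RSym.coef_zero {R : ℝ} (hR : 0 < R) {F : ℝ → ℝ} (h : RSym R F)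
    (n : ℤ) (hn : Even n) : coef R F n = 0 := by
  have key : ∫ x in (-(2 * R))..(-(2 * R) + 4 * R), F x * Real.cos (frq R n * x)
      = - ∫ x in (-(2 * R))..(-(2 * R) + 4 * R), F x * Real.cos (frq R n * x) := by
    have hp : Function.Periodic (fun y => F y * Real.cos (frq R n * y)) (4 * R) := by
      intro y
      show F (y + 4 * R) * Real.cos (frq R n * (y + 4 * R)) = _
      rw [h.per, frq_period hR]
    have h1 : ∀ x, F x * Real.cos (frq R n * x)
        = -((fun y => F y * Real.cos (frq R n * y)) (2 * R - x)) := by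
      intro x
      simp only [h.odd, RSym.cos_refl hR, hn.neg_one_zpow]; ring
    have h3 := intervalIntegral.integral_congr (μ := volume) (a := -(2 * R))
      (b := -(2 * R) + 4 * R) (fun x _ => h1 x)
    refine h3.trans ?_
    rw [intervalIntegral.integral_neg, intervalIntegral.integral_comp_sub_left
      (fun y => F y * Real.cos (frq R n * y))]
    have := hp.intervalIntegral_add_eq 0 (-(2 * R))
    rw [← this]; congr 2 <;> ring
  unfold coef
  have : ∫ x in (-(2 * R))..(-(2 * R) + 4 * R), F x * Real.cos (frq R n * x) = 0 := by linarith
  rw [this, mul_zero]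

lemma coef_decay {R : ℝ} (hR : 0 < R) {F : ℝ → ℝ} (hF : Continuous F) (hs : RSym R F)
    {s D : ℝ} (hD : ∀ x h, 0 ≤ h → |F (x + h) + F (x - h) - 2 * F x| ≤ D * h ^ s) (n : ℤ)  :
    |coef R F n| ≤ D / 4 * (2 * R) ^ s * |(n:ℝ)| ^ (-s) := by
  have hD0 : 0 ≤ D := by
    have := hD 0 1 zero_le_one
    rw [Real.one_rpow, mul_one] at this
    exact le_trans (abs_nonneg _) this
  rcases eq_or_ne n 0 with rfl | hn
  · rw [hs.coef_zero hR 0 (by simp), abs_zero]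
    positivity
  have hn' : 0 < |(n:ℝ)| := by positivity
  set h := 2 * R / |(n:ℝ)| with hh
  have hpos : 0 < h := by positivity
  have h1 := coef_shift hR hF hs.per n h
  have hc : Real.cos (frq R n * h) = -1 := by
    have : |frq R n * h| = Real.pi := by
      unfold frq
      rw [abs_mul, abs_mul, abs_of_pos hpos, abs_of_pos (by positivity : 0 < Real.pi / (2 * R)), hh]
      field_simp
    rw [← Real.cos_abs, this, Real.cos_pi]
  rw [hc] at h1
  have h2 := coef_abs_le hR (fun x => hD x h hpos.le) n
  rw [h1, abs_mul] at h2
  norm_num at h2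
  rw [hh, Real.div_rpow (by positivity) (by positivity)] at h2
  rw [Real.rpow_neg (abs_nonneg _)]
  have : D * ((2 * R) ^ s / |(n:ℝ)| ^ s) = D * (2 * R) ^ s * (|(n:ℝ)| ^ s)⁻¹ := by ring
  rw [this] at h2
  linarith

lemma cos_series {R : ℝ} (hR : 0 < R) {F : ℝ → ℝ} (hF : Continuous F) (hs : RSym R F)
    (hsum : Summable (coef R F)) (x : ℝ) :
    HasSum (fun n : ℤ => coef R F n * Real.cos (frq R n * x)) (F x) := by
  have : Fact (0 < 4 * R) := ⟨by positivity⟩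
  have hperC : Function.Periodic (fun x : ℝ => (F x : ℂ)) (4 * R) := fun x => by
    simp only [hs.per]
  let f : C(AddCircle (4 * R), ℂ) := ⟨hperC.lift, by
    apply continuous_coinduced_dom.mpr
    exact Complex.continuous_ofReal.comp hF⟩
  have hf : ∀ x : ℝ, f (x : AddCircle (4 * R)) = (F x : ℂ) := fun x => hperC.lift_coe x
  have hfour : ∀ (n : ℤ) (x : ℝ), (fourier n (x : AddCircle (4 * R)) : ℂ)
      = Complex.exp ((frq R n * x : ℝ) * Complex.I) := by
    intro n x
    rw [fourier_coe_apply]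
    congr 1
    unfold frq
    push_cast
    have : (R : ℂ) ≠ 0 := by exact_mod_cast hR.ne'
    field_simp
    ring
  have hco : ∀ n, fourierCoeff f n = (coef R F n : ℂ) := by
    intro n
    rw [fourierCoeff_eq_intervalIntegral _ n (-(2 * R))]
    have e : ∀ x : ℝ, (fourier (-n) (x : AddCircle (4 * R)) : ℂ) • f (x : AddCircle (4 * R))
        = ((F x * Real.cos (frq R n * x) : ℝ) : ℂ)
          - ((F x * Real.sin (frq R n * x) : ℝ) : ℂ) * Complex.I := by
      intro x
      rw [hfour, hf]
      have : frq R (-n) * x = -(frq R n * x) := by unfold frq; push_cast; ring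
      rw [this, Complex.exp_mul_I, ← Complex.ofReal_cos, ← Complex.ofReal_sin, Real.cos_neg,
        Real.sin_neg]
      push_cast
      rw [smul_eq_mul]; ring
    simp_rw [e]
    have i1 : Continuous (fun x => ((F x * Real.cos (frq R n * x) : ℝ) : ℂ)) := by fun_prop
    have i2 : Continuous (fun x => ((F x * Real.sin (frq R n * x) : ℝ) : ℂ) * Complex.I) := by
      fun_prop
    rw [intervalIntegral.integral_sub (i1.intervalIntegrable _ _) (i2.intervalIntegrable _ _),
      intervalIntegral.integral_mul_const, intervalIntegral.integral_ofReal,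
      intervalIntegral.integral_ofReal]
    have hz : ∫ x in (-(2 * R))..(-(2 * R) + 4 * R), F x * Real.sin (frq R n * x) = 0 := by
      have e2 : -(2 * R) + 4 * R = 2 * R := by ring
      rw [e2]
      have h1 := intervalIntegral.integral_comp_neg (a := -(2 * R)) (b := 2 * R)
        (fun x => F x * Real.sin (frq R n * x))
      simp only [hs.even, mul_neg, Real.sin_neg, neg_neg] at h1
      rw [intervalIntegral.integral_neg] at h1
      linarith
    rw [hz]
    unfold coef
    push_cast
    simp
  have hsC : Summable (fourierCoeff f) := by
    have : fourierCoeff f = fun n => (coef R F n : ℂ) := funext hco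
    rw [this]
    exact Complex.ofRealCLM.summable hsum
  have := has_pointwise_sum_fourier_series_of_summable hsC (x : AddCircle (4 * R))
  rw [hf] at this
  have h2 := Complex.reCLM.hasSum this
  simp only [Complex.reCLM_apply, Complex.ofReal_re] at h2
  convert! h2 using 2 with n
  rw [hco, hfour, smul_eq_mul, Complex.re_ofReal_mul, Complex.exp_ofReal_mul_I_re]

end

section

lemma exists_max_periodic {T : ℝ} (hT : 0 < T) {g : ℝ → ℝ} (hg : Continuous g)
    (hper : ∀ t, g (t + T) = g t) : ∃ t₀, ∀ t, g t ≤ g t₀ := by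
  obtain ⟨t₀, -, h⟩ := isCompact_Icc.exists_isMaxOn (nonempty_Icc.2 hT.le)
    (hg.continuousOn (s := Icc 0 T))
  refine ⟨t₀, fun t => ?_⟩
  obtain ⟨y, hy, e⟩ := Function.Periodic.exists_mem_Ico₀ (f := g) (c := T) hper hT t
  rw [e]
  exact h (Ico_subset_Icc_self hy)

lemma pode {T μ : ℝ} (hT : 0 < T) (hμ : 0 < μ) {φ : ℝ → ℝ} (hφ : Continuous φ)
    (hper : ∀ t, φ (t + T) = φ t) :
    ∃ c : ℝ → ℝ, (∀ t, HasDerivAt c (-μ * c t + φ t) t) ∧ (∀ t, c (t + T) = c t) ∧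
      ∀ B, (∀ t, |φ t| ≤ B) → ∀ t, |c t| ≤ B / μ := by
  set I : ℝ → ℝ := fun t => ∫ s in (0:ℝ)..t, Real.exp (μ * s) * φ s with hI
  have hId : ∀ t, HasDerivAt I (Real.exp (μ * t) * φ t) t := fun t =>
    ((by fun_prop : Continuous fun s => Real.exp (μ * s) * φ s)).integral_hasStrictDerivAt 0 t
      |>.hasDerivAt
  set k : ℝ := Real.exp (-μ * T) * I T / (1 - Real.exp (-μ * T)) with hk
  set c : ℝ → ℝ := fun t => Real.exp (-μ * t) * (k + I t) with hc
  have hexp : ∀ t, HasDerivAt (fun t => Real.exp (-μ * t)) (Real.exp (-μ * t) * (-μ)) t := by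
    intro t
    have := ((hasDerivAt_id t).const_mul (-μ)).exp
    simpa using this
  have hcd : ∀ t, HasDerivAt c (-μ * c t + φ t) t := by
    intro t
    have := (hexp t).mul ((hId t).const_add k)
    refine this.congr_deriv ?_
    have e : Real.exp (-μ * t) * Real.exp (μ * t) = 1 := by
      rw [← Real.exp_add]; simp
    simp only [hc]
    linear_combination φ t * e
  have hcper : ∀ t, c (t + T) = c t := by
    have he : ∀ t, HasDerivAt (fun t => (c (t + T) - c t) * Real.exp (μ * t)) 0 t := by
      intro t
      have h1 : HasDerivAt (fun t => c (t + T)) (-μ * c (t + T) + φ (t + T)) t :=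
        (hcd (t + T)).comp_add_const t T
      have h2 : HasDerivAt (fun t => Real.exp (μ * t)) (Real.exp (μ * t) * μ) t := by
        simpa using ((hasDerivAt_id t).const_mul μ).exp
      refine ((h1.sub (hcd t)).mul h2).congr_deriv ?_
      rw [hper]; simp only [Pi.sub_apply]; ring
    have hconst := is_const_of_deriv_eq_zero (f := fun t => (c (t + T) - c t) * Real.exp (μ * t))
      (fun t => (he t).differentiableAt) (fun t => (he t).deriv)
    intro t
    have h0 := hconst t 0
    have hc0 : c (0 + T) - c 0 = 0 := by
      have hI0 : I 0 = 0 := by simp [hI]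
      have : 1 - Real.exp (-μ * T) ≠ 0 := by
        have : Real.exp (-μ * T) < 1 := by
          rw [Real.exp_lt_one_iff]; nlinarith
        linarith
      have hkk : k * (1 - Real.exp (-μ * T)) = Real.exp (-μ * T) * I T := div_mul_cancel₀ _ this
      simp only [hc, zero_add, hI0, mul_zero, Real.exp_zero]
      linear_combination -hkk
    simp only [hc0, zero_mul] at h0
    have := (mul_eq_zero.1 h0).resolve_right (Real.exp_pos _).ne'
    linarith
  refine ⟨c, hcd, hcper, fun B hB t => ?_⟩
  have hcc : Continuous c := continuous_iff_continuousAt.2 fun t => (hcd t).continuousAt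
  obtain ⟨t₀, ht₀⟩ := exists_max_periodic hT (g := fun t => c t ^ 2) (by fun_prop)
    (fun t => by simp only [hcper])
  have hloc : IsLocalMax (fun t => c t ^ 2) t₀ := Filter.Eventually.of_forall ht₀
  have hz := hloc.hasDerivAt_eq_zero ((hcd t₀).pow 2)
  have hB0 : 0 ≤ B := (abs_nonneg _).trans (hB 0)
  have hle : |c t₀| ≤ B / μ := by
    have : c t₀ * (-μ * c t₀ + φ t₀) = 0 := by
      norm_num at hz; rcases hz with h | h <;> simp [h]
    rcases mul_eq_zero.1 this with h | h
    · rw [h, abs_zero]; positivity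
    · have : c t₀ = φ t₀ / μ := by field_simp; linarith
      rw [this, abs_div, abs_of_pos hμ]
      exact div_le_div_of_nonneg_right (hB t₀) hμ.le
  exact (sq_le_sq.1 (ht₀ t)).trans hle

lemma cos_sub_le {σ : ℝ} (h0 : 0 ≤ σ) (h1 : σ ≤ 1) (a b : ℝ) :
    |Real.cos a - Real.cos b| ≤ 2 * |a - b| ^ σ := by
  have hl : |Real.cos a - Real.cos b| ≤ |a - b| := by
    have := Real.lipschitzWith_cos.dist_le_mul a b
    simpa [Real.dist_eq] using this
  rcases le_total |a - b| 1 with h | h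
  · have h2 : |a - b| ≤ |a - b| ^ σ := by
      rcases eq_or_lt_of_le (abs_nonneg (a - b)) with h3 | h3
      · rw [← h3]; positivity
      · exact Real.self_le_rpow_of_le_one h3.le h h1
    have : 0 ≤ |a - b| ^ σ := by positivity
    linarith
  · have h2 : 1 ≤ |a - b| ^ σ := Real.one_le_rpow h h0
    have h3 := abs_sub (Real.cos a) (Real.cos b)
    have h4 := Real.abs_cos_le_one a
    have h5 := Real.abs_cos_le_one b
    linarith [abs_sub (Real.cos a) (Real.cos b)]

lemma cos_sd_le {σ : ℝ} (h0 : 0 ≤ σ) (h1 : σ ≤ 2) (y : ℝ) :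
    |2 * Real.cos y - 2| ≤ 4 * |y| ^ σ := by
  have hc := Real.cos_le_one y
  have hc' := Real.neg_one_le_cos y
  rw [abs_of_nonpos (by linarith)]
  rcases le_total |y| 1 with h | h
  · have h2 : y ^ 2 ≤ |y| ^ σ := by
      rcases eq_or_lt_of_le (abs_nonneg y) with h3 | h3
      · have : y = 0 := abs_eq_zero.1 h3.symm
        rw [this]; simp; positivity
      · rw [← sq_abs, ← Real.rpow_natCast]
        exact Real.rpow_le_rpow_of_exponent_ge h3 h (by exact_mod_cast h1)
    have h4 := Real.one_sub_sq_div_two_le_cos (x := y)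
    have : 0 ≤ |y| ^ σ := by positivity
    linarith
  · have h2 : 1 ≤ |y| ^ σ := Real.one_le_rpow h h0
    linarith

lemma abs_frq {R : ℝ} (hR : 0 < R) (n : ℤ) : |frq R n| = Real.pi / (2 * R) * |(n:ℝ)| := by
  unfold frq
  rw [abs_mul, abs_of_pos (by positivity : 0 < Real.pi / (2 * R))]

/-- zeta-like constants -/
def zc (p : ℝ) : ℝ := ∑' n : ℤ, |(n:ℝ)| ^ (-p)

lemma zc_summable {p : ℝ} (hp : 1 < p) : Summable fun n : ℤ => |(n:ℝ)| ^ (-p) :=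
  Real.summable_abs_int_rpow hp

lemma rpow_split {r σ : ℝ} (hr : σ < r) (hσ : 0 < σ) (n : ℤ) :
    |(n:ℝ)| ^ (-r) * |(n:ℝ)| ^ σ ≤ |(n:ℝ)| ^ (-(r - σ)) := by
  rcases eq_or_ne n 0 with rfl | hn
  · simp only [Int.cast_zero, abs_zero]
    rw [Real.zero_rpow (by linarith : -r ≠ 0), zero_mul]; positivity
  · rw [← Real.rpow_add (by positivity)]
    apply le_of_eq; congr 1; ring

lemma ts_summable {R : ℝ} {c : ℤ → ℝ} {B r : ℝ} (hr : 1 < r)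
    (hc : ∀ n, |c n| ≤ B * |(n:ℝ)| ^ (-r)) (x : ℝ) :
    Summable fun n => c n * Real.cos (frq R n * x) := by
  refine Summable.of_norm_bounded ((zc_summable hr).mul_left B) fun n => ?_
  rw [Real.norm_eq_abs, abs_mul]
  exact (mul_le_of_le_one_right (abs_nonneg _) (Real.abs_cos_le_one _)).trans (hc n)

lemma ts_holder {R : ℝ} (hR : 0 < R) {c : ℤ → ℝ} {B r σ : ℝ} (hσ : 0 < σ) (hσ1 : σ ≤ 1)
    (hr : 1 < r - σ) (hB : 0 ≤ B)
    (hc : ∀ n, |c n| ≤ B * |(n:ℝ)| ^ (-r)) (x y : ℝ) :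
    |(∑' n, c n * Real.cos (frq R n * x)) - ∑' n, c n * Real.cos (frq R n * y)|
      ≤ (2 * (Real.pi / (2 * R)) ^ σ * zc (r - σ)) * B * |x - y| ^ σ := by
  rw [← (ts_summable (by linarith) hc x).tsum_sub (ts_summable (by linarith) hc y)]
  have hb : ∀ n, ‖c n * Real.cos (frq R n * x) - c n * Real.cos (frq R n * y)‖
      ≤ (2 * (Real.pi / (2 * R)) ^ σ * B * |x - y| ^ σ) * |(n:ℝ)| ^ (-(r - σ)) := by
    intro n
    rw [← mul_sub, Real.norm_eq_abs, abs_mul]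
    have h1 := cos_sub_le hσ.le hσ1 (frq R n * x) (frq R n * y)
    rw [← mul_sub, abs_mul, abs_frq hR, Real.mul_rpow (by positivity) (by positivity),
      Real.mul_rpow (by positivity) (by positivity)] at h1
    calc |c n| * |Real.cos (frq R n * x) - Real.cos (frq R n * y)|
        ≤ (B * |(n:ℝ)| ^ (-r)) * (2 * ((Real.pi / (2 * R)) ^ σ * |(n:ℝ)| ^ σ * |x - y| ^ σ)) :=
          mul_le_mul (hc n) h1 (abs_nonneg _) (by positivity)
      _ = (2 * (Real.pi / (2 * R)) ^ σ * B * |x - y| ^ σ) * (|(n:ℝ)| ^ (-r) * |(n:ℝ)| ^ σ) := by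
          ring
      _ ≤ _ := mul_le_mul_of_nonneg_left (rpow_split (by linarith) hσ n) (by positivity)
  have h2 := tsum_of_norm_bounded ((zc_summable hr).hasSum.mul_left
    (2 * (Real.pi / (2 * R)) ^ σ * B * |x - y| ^ σ)) hb
  rw [Real.norm_eq_abs] at h2
  refine h2.trans (le_of_eq ?_)
  unfold zc; ring

lemma ts_sd {R : ℝ} (hR : 0 < R) {c : ℤ → ℝ} {B r σ : ℝ} (hσ : 0 < σ) (hσ1 : σ ≤ 2)
    (hr : 1 < r - σ) (hB : 0 ≤ B)
    (hc : ∀ n, |c n| ≤ B * |(n:ℝ)| ^ (-r)) (x h : ℝ) (hh : 0 ≤ h) :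
    |(∑' n, c n * Real.cos (frq R n * (x + h))) + (∑' n, c n * Real.cos (frq R n * (x - h)))
      - 2 * ∑' n, c n * Real.cos (frq R n * x)|
      ≤ (4 * (Real.pi / (2 * R)) ^ σ * zc (r - σ)) * B * h ^ σ := by
  have s1 := fun x => ts_summable (R := R) (by linarith : 1 < r) hc x
  rw [← tsum_mul_left, ← (s1 _).tsum_add (s1 _), ← ((s1 _).add (s1 _)).tsum_sub ((s1 _).mul_left 2)]
  have hb : ∀ n, ‖c n * Real.cos (frq R n * (x + h)) + c n * Real.cos (frq R n * (x - h))
      - 2 * (c n * Real.cos (frq R n * x))‖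
      ≤ (4 * (Real.pi / (2 * R)) ^ σ * B * h ^ σ) * |(n:ℝ)| ^ (-(r - σ)) := by
    intro n
    have e : c n * Real.cos (frq R n * (x + h)) + c n * Real.cos (frq R n * (x - h))
      - 2 * (c n * Real.cos (frq R n * x))
      = c n * (Real.cos (frq R n * x) * (2 * Real.cos (frq R n * h) - 2)) := by
      rw [mul_add, mul_sub, Real.cos_add, Real.cos_sub]; ring
    rw [e, Real.norm_eq_abs, abs_mul, abs_mul]
    have h1 := cos_sd_le hσ.le hσ1 (frq R n * h)
    rw [abs_mul (frq R n), abs_frq hR, abs_of_nonneg hh,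
      Real.mul_rpow (by positivity) (by positivity),
      Real.mul_rpow (by positivity) (by positivity)] at h1
    have h3 : |Real.cos (frq R n * x)| * |2 * Real.cos (frq R n * h) - 2| ≤
      4 * ((Real.pi / (2 * R)) ^ σ * |(n:ℝ)| ^ σ * h ^ σ) :=
      (mul_le_of_le_one_left (abs_nonneg _) (Real.abs_cos_le_one _)).trans h1
    calc _ ≤ (B * |(n:ℝ)| ^ (-r)) * (4 * ((Real.pi / (2 * R)) ^ σ * |(n:ℝ)| ^ σ * h ^ σ)) :=
          mul_le_mul (hc n) h3 (by positivity) (by positivity)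
      _ = (4 * (Real.pi / (2 * R)) ^ σ * B * h ^ σ) * (|(n:ℝ)| ^ (-r) * |(n:ℝ)| ^ σ) := by
          ring
      _ ≤ _ := mul_le_mul_of_nonneg_left (rpow_split (by linarith) hσ n) (by positivity)
  have h2 := tsum_of_norm_bounded ((zc_summable hr).hasSum.mul_left
    (4 * (Real.pi / (2 * R)) ^ σ * B * h ^ σ)) hb
  rw [Real.norm_eq_abs] at h2
  refine h2.trans (le_of_eq ?_)
  unfold zc; ring

end

section

/-- second difference bound of order `s` -/
def SDB (F : ℝ → ℝ → ℝ) (s D : ℝ) : Prop :=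
  ∀ t x h, 0 ≤ h → |F (x + h) t + F (x - h) t - 2 * F x t| ≤ D * h ^ s

theorem lin {R T L : ℝ} (hR : 0 < R) (hT : 0 < T) (hL : 0 < L) :
    ∃ C : ℝ, 0 ≤ C ∧ ∀ (F : ℝ → ℝ → ℝ) (D : ℝ),
      Continuous (fun p : ℝ × ℝ => F p.1 p.2) → (∀ x t, F x (t + T) = F x t) →
      (∀ t, RSym R (fun x => F x t)) → SDB F (5 / 4) D →
      ∃ u ux uxx : ℝ → ℝ → ℝ, Continuous (fun p : ℝ × ℝ => u p.1 p.2) ∧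
        (∀ x t, u x (t + T) = u x t) ∧ (∀ t, RSym R (fun x => u x t)) ∧
        (∀ x t, HasDerivAt (fun y => u y t) (ux x t) x) ∧
        (∀ x t, HasDerivAt (fun y => ux y t) (uxx x t) x) ∧
        (∀ x t, HasDerivAt (fun τ => u x τ) (uxx x t - L * u x t + F x t) t) ∧
        (∀ M, (∀ x t, |F x t| ≤ M) → ∀ t x y, |u x t - u y t| ≤ C * M * |x - y| ^ (5 / 8 : ℝ)) ∧
        (∀ D', SDB F (5 / 8) D' → SDB u (5 / 4) (C * D')) ∧
        (∀ x t, |uxx x t| ≤ C * D) := by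
  set κ : ℝ → ℝ := fun s => (2 * R) ^ s / 4 * (2 * R / Real.pi) ^ 2 with hκ
  have hκ0 : ∀ s, 0 ≤ κ s := fun s => by simp only [hκ]; positivity
  have hz0 : ∀ p, 0 ≤ zc p := fun p => tsum_nonneg fun n => by positivity
  set C1 : ℝ := (2 * (Real.pi / (2 * R)) ^ (5 / 8 : ℝ) * zc (2 - 5 / 8)) * (4 * κ 0) with hC1
  set C2 : ℝ := (4 * (Real.pi / (2 * R)) ^ (5 / 4 : ℝ) * zc (2 + 5 / 8 - 5 / 4)) * κ (5 / 8) with hC2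
  set C3 : ℝ := (Real.pi / (2 * R)) ^ 2 * zc (5 / 4) * κ (5 / 4) with hC3
  have hC1' : 0 ≤ C1 := by have := hz0 (2 - 5 / 8); have := hκ0 0; positivity
  have hC2' : 0 ≤ C2 := by have := hz0 (2 + 5 / 8 - 5 / 4); have := hκ0 (5 / 8); positivity
  have hC3' : 0 ≤ C3 := by have := hz0 (5 / 4); have := hκ0 (5 / 4); positivity
  refine ⟨C1 + C2 + C3, by positivity, ?_⟩
  intro F D hF hper hsym hD
  have hFx : ∀ t, Continuous fun x => F x t := fun t => by fun_prop
  have hSD0 : ∀ {s D'}, SDB F s D' → 0 ≤ D' := by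
    intro s D' h
    have := h 0 0 1 zero_le_one
    rw [Real.one_rpow, mul_one] at this
    exact (abs_nonneg _).trans this
  have hacont : ∀ n, Continuous fun t => coef R (fun x => F x t) n := by
    intro n
    unfold coef
    refine continuous_const.mul ?_
    apply intervalIntegral.continuous_parametric_intervalIntegral_of_continuous'
    fun_prop
  have haper : ∀ n t, coef R (fun x => F x (t + T)) n = coef R (fun x => F x t) n := by
    intro n t; simp only [hper]
  have hμ : ∀ n, 0 < frq R n ^ 2 + L := fun n => by positivity
  choose c hcd hcper hcb using fun n => pode hT (hμ n) (hacont n) (haper n)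
  have hczero : ∀ n, Even n → ∀ t, c n t = 0 := by
    intro n hn t
    have := hcb n 0 (fun t => by rw [(hsym t).coef_zero hR n hn, abs_zero]) t
    rw [zero_div] at this
    exact abs_nonpos_iff.1 this
  have hcB : ∀ s D', SDB F s D' → ∀ t n, |c n t| ≤ (κ s * D') * |(n:ℝ)| ^ (-(2 + s)) := by
    intro s D' h t n
    have hD' := hSD0 h
    have hκs := hκ0 s
    rcases eq_or_ne n 0 with rfl | hn
    · rw [hczero 0 (by simp), abs_zero]; positivity
    have h1 := hcb n _ (fun t => coef_decay hR (hFx t) (hsym t) (fun x h' => h t x h') n) t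
    refine h1.trans ?_
    have hn' : 0 < |(n:ℝ)| := by positivity
    have hfr : frq R n ^ 2 = (Real.pi / (2 * R)) ^ 2 * |(n:ℝ)| ^ 2 := by
      rw [← sq_abs, abs_frq hR]; ring
    have h2 : (Real.pi / (2 * R)) ^ 2 * |(n:ℝ)| ^ 2 ≤ frq R n ^ 2 + L := by linarith
    calc D' / 4 * (2 * R) ^ s * |(n:ℝ)| ^ (-s) / (frq R n ^ 2 + L)
        ≤ D' / 4 * (2 * R) ^ s * |(n:ℝ)| ^ (-s) / ((Real.pi / (2 * R)) ^ 2 * |(n:ℝ)| ^ 2) := by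
          apply div_le_div_of_nonneg_left _ _ h2 <;> positivity
      _ = _ := by
          rw [neg_add, Real.rpow_add hn', Real.rpow_neg hn'.le 2]
          simp only [hκ]
          have := Real.pi_pos
          rw [show |(n:ℝ)| ^ (2:ℝ) = |(n:ℝ)| ^ 2 from Real.rpow_ofNat _ 2]
          field_simp
  have hcB54 := hcB _ _ hD
  have hD0 := hSD0 hD
  have hab : ∀ n t, |coef R (fun x => F x t) n| ≤
      D / 4 * (2 * R) ^ (5 / 4 : ℝ) * |(n:ℝ)| ^ (-(5 / 4) : ℝ) := fun n t =>
    coef_decay hR (hFx t) (hsym t) (fun x h' => hD t x h') n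
  have hωc : ∀ t n, frq R n ^ 2 * |c n t| ≤
      ((Real.pi / (2 * R)) ^ 2 * (κ (5 / 4) * D)) * |(n:ℝ)| ^ (-(5 / 4) : ℝ) := by
    intro t n
    have hκs := hκ0 (5 / 4)
    have hfr : frq R n ^ 2 = (Real.pi / (2 * R)) ^ 2 * |(n:ℝ)| ^ (2:ℝ) := by
      rw [← sq_abs, abs_frq hR, Real.rpow_ofNat]; ring
    calc frq R n ^ 2 * |c n t|
        ≤ (Real.pi / (2 * R)) ^ 2 * |(n:ℝ)| ^ (2:ℝ) *
          ((κ (5 / 4) * D) * |(n:ℝ)| ^ (-(2 + 5 / 4) : ℝ)) := by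
          rw [hfr]; exact mul_le_mul_of_nonneg_left (hcB54 t n) (by positivity)
      _ = ((Real.pi / (2 * R)) ^ 2 * (κ (5 / 4) * D)) *
          (|(n:ℝ)| ^ (-(2 + 5 / 4) : ℝ) * |(n:ℝ)| ^ (2:ℝ)) := by ring
      _ ≤ ((Real.pi / (2 * R)) ^ 2 * (κ (5 / 4) * D)) * |(n:ℝ)| ^ (-(2 + 5 / 4 - 2) : ℝ) := by
          apply mul_le_mul_of_nonneg_left _ (by positivity)
          exact rpow_split (by norm_num) (by norm_num) n
      _ = _ := by norm_num
  set P : ℝ := (Real.pi / (2 * R)) ^ 2 * (κ (5 / 4) * D) with hP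
  have hP0 : 0 ≤ P := by have := hκ0 (5 / 4); positivity
  have hz54 : Summable fun n : ℤ => |(n:ℝ)| ^ (-(5 / 4) : ℝ) := zc_summable (by norm_num)
  have hz54P : Summable fun n : ℤ => P * |(n:ℝ)| ^ (-(5 / 4) : ℝ) := hz54.mul_left P
  have hz4 : Summable fun n : ℤ => (κ (5 / 4) * D) * |(n:ℝ)| ^ (-(2 + 5 / 4) : ℝ) :=
    (zc_summable (by norm_num)).mul_left _
  set u : ℝ → ℝ → ℝ := fun x t => ∑' n, c n t * Real.cos (frq R n * x) with hu
  set ux : ℝ → ℝ → ℝ := fun x t => ∑' n, c n t * (-Real.sin (frq R n * x) * frq R n) with hux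
  set uxx : ℝ → ℝ → ℝ := fun x t =>
    ∑' n, c n t * (-(Real.cos (frq R n * x) * frq R n) * frq R n) with huxx
  have hccont : ∀ n, Continuous (c n) := fun n =>
    continuous_iff_continuousAt.2 fun t => (hcd n t).continuousAt
  have hsumm : ∀ x t, Summable fun n => c n t * Real.cos (frq R n * x) := fun x t =>
    ts_summable (by norm_num) (hcB54 t) x
  have hlin : ∀ (n : ℤ) (x : ℝ), HasDerivAt (fun y => frq R n * y) (frq R n) x := fun n x => by
    simpa using (hasDerivAt_id x).const_mul (frq R n)
  have hfrsq : ∀ n : ℤ, n ≠ 0 → |frq R n| ≤ (2 * R / Real.pi) * frq R n ^ 2 := by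
    intro n hn
    rw [← sq_abs, abs_frq hR]
    have h1 : (1:ℝ) ≤ |(n:ℝ)| := by
      exact_mod_cast Int.one_le_abs hn
    have := Real.pi_pos
    have e : 2 * R / Real.pi * (Real.pi / (2 * R) * |(n:ℝ)|) ^ 2
      = Real.pi / (2 * R) * |(n:ℝ)| * |(n:ℝ)| := by field_simp
    rw [e]
    exact le_mul_of_one_le_right (by positivity) h1
  have hωc1 : ∀ t n, |c n t| * |frq R n| ≤ (2 * R / Real.pi) * (P * |(n:ℝ)| ^ (-(5 / 4) : ℝ)) := by
    intro t n
    have hpi := Real.pi_pos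
    rcases eq_or_ne n 0 with rfl | hn
    · rw [hczero 0 (by simp), abs_zero, zero_mul]; positivity
    · calc |c n t| * |frq R n| ≤ |c n t| * ((2 * R / Real.pi) * frq R n ^ 2) :=
            mul_le_mul_of_nonneg_left (hfrsq n hn) (abs_nonneg _)
        _ = (2 * R / Real.pi) * (frq R n ^ 2 * |c n t|) := by ring
        _ ≤ _ := mul_le_mul_of_nonneg_left (hωc t n) (by positivity)
  refine ⟨u, ux, uxx, ?_, ?_, ?_, ?_, ?_, ?_, ?_, ?_, ?_⟩
  · -- continuity
    apply continuous_tsum (u := fun n : ℤ => (κ (5 / 4) * D) * |(n:ℝ)| ^ (-(2 + 5 / 4) : ℝ))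
    · intro n
      have := hccont n
      fun_prop
    · exact hz4
    · intro n p
      rw [Real.norm_eq_abs, abs_mul]
      exact (mul_le_of_le_one_right (abs_nonneg _) (Real.abs_cos_le_one _)).trans (hcB54 p.2 n)
  · intro x t; simp only [hu, hcper]
  · intro t
    constructor
    · intro x
      simp only [hu, mul_neg, Real.cos_neg]
    · intro x
      simp only [hu]
      rw [← tsum_neg]
      congr 1; ext n
      rw [RSym.cos_refl hR]
      rcases Int.even_or_odd n with h | h
      · rw [hczero n h]; simp
      · rw [h.neg_one_zpow]; ring
  · intro x t
    refine hasDerivAt_tsum (hz54P.mul_left (2 * R / Real.pi)) (y₀ := 0)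
      (g := fun n y => c n t * Real.cos (frq R n * y))
      (g' := fun n y => c n t * (-Real.sin (frq R n * y) * frq R n)) ?_ ?_ (hsumm 0 t) x
    · intro n y
      exact ((hlin n y).cos).const_mul _
    · intro n y
      rw [Real.norm_eq_abs, abs_mul, abs_mul, abs_neg]
      refine le_trans ?_ (hωc1 t n)
      apply mul_le_mul_of_nonneg_left _ (abs_nonneg _)
      exact mul_le_of_le_one_left (abs_nonneg _) (Real.abs_sin_le_one _)
  · intro x t
    refine hasDerivAt_tsum hz54P (y₀ := 0)
      (g := fun n y => c n t * (-Real.sin (frq R n * y) * frq R n))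
      (g' := fun n y => c n t * (-(Real.cos (frq R n * y) * frq R n) * frq R n)) ?_ ?_ ?_ x
    · intro n y
      exact (((hlin n y).sin).neg.mul_const _).const_mul _
    · intro n y
      rw [Real.norm_eq_abs, abs_mul, abs_mul, abs_neg, abs_mul]
      refine le_trans ?_ (hωc t n)
      rw [mul_comm (frq R n ^ 2)]
      apply mul_le_mul_of_nonneg_left _ (abs_nonneg _)
      rw [mul_assoc, ← sq, sq_abs]
      exact mul_le_of_le_one_left (by positivity) (Real.abs_cos_le_one _)
    · simp
  · intro x t
    have hder := hasDerivAt_tsum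
      (u := fun n : ℤ => (D / 4 * (2 * R) ^ (5 / 4 : ℝ) * |(n:ℝ)| ^ (-(5 / 4) : ℝ)) +
        (P * |(n:ℝ)| ^ (-(5 / 4) : ℝ) + L * ((κ (5 / 4) * D) * |(n:ℝ)| ^ (-(2 + 5 / 4) : ℝ))))
      (g := fun (n : ℤ) τ => c n τ * Real.cos (frq R n * x))
      (g' := fun (n : ℤ) τ => (-(frq R n ^ 2 + L) * c n τ + coef R (fun x => F x τ) n)
        * Real.cos (frq R n * x))
      ((hz54.mul_left _).add (hz54P.add (hz4.mul_left L))) (fun n τ => (hcd n τ).mul_const _)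
      ?_ (hsumm x 0) t
    · refine hder.congr_deriv ?_
      have hsa : Summable (coef R (fun x => F x t)) :=
        Summable.of_norm_bounded (hz54.mul_left _) (fun n => hab n t)
      have h1 := cos_series hR (hFx t) (hsym t) hsa x
      have h2 : Summable fun n => c n t * (-(Real.cos (frq R n * x) * frq R n) * frq R n) := by
        refine Summable.of_norm_bounded hz54P fun n => ?_
        rw [Real.norm_eq_abs, abs_mul, abs_mul, abs_neg, abs_mul]
        refine le_trans ?_ (hωc t n)
        rw [mul_comm (frq R n ^ 2)]
        apply mul_le_mul_of_nonneg_left _ (abs_nonneg _)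
        rw [mul_assoc, ← sq, sq_abs]
        exact mul_le_of_le_one_left (by positivity) (Real.abs_cos_le_one _)
      have h3 := (h2.hasSum.sub ((hsumm x t).hasSum.mul_left L)).add h1
      rw [← h3.tsum_eq]
      congr 1; ext n; ring
    · intro n τ
      rw [Real.norm_eq_abs, abs_mul]
      refine (mul_le_of_le_one_right (abs_nonneg _) (Real.abs_cos_le_one _)).trans ?_
      have h1 := hab n τ
      have h2 := hωc τ n
      have h3 := mul_le_mul_of_nonneg_left (hcB54 τ n) hL.le
      calc |-(frq R n ^ 2 + L) * c n τ + coef R (fun x => F x τ) n|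
          ≤ |-(frq R n ^ 2 + L) * c n τ| + |coef R (fun x => F x τ) n| := abs_add_le _ _
        _ = (frq R n ^ 2 * |c n τ| + L * |c n τ|) + |coef R (fun x => F x τ) n| := by
            rw [abs_mul, abs_neg, abs_of_pos (hμ n)]; ring
        _ ≤ _ := by linarith
  · intro M hM t x y
    have hM0 : 0 ≤ M := (abs_nonneg _).trans (hM 0 0)
    have hs0 : SDB F 0 (4 * M) := by
      intro t x h _
      rw [Real.rpow_zero, mul_one]
      have a1 := abs_le.1 (hM (x + h) t)
      have a2 := abs_le.1 (hM (x - h) t)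
      have a3 := abs_le.1 (hM x t)
      rw [abs_le]; constructor <;> linarith [a1.1, a1.2, a2.1, a2.2, a3.1, a3.2]
    have h1 := hcB _ _ hs0 t
    rw [add_zero] at h1
    have h2 := ts_holder hR (σ := 5 / 8) (by norm_num) (by norm_num) (by norm_num)
      (by have := hκ0 0; positivity) h1 x y
    refine h2.trans ?_
    apply mul_le_mul_of_nonneg_right _ (by positivity)
    calc _ = C1 * M := by rw [hC1]; ring
      _ ≤ _ := mul_le_mul_of_nonneg_right (by linarith) hM0
  · intro D' hD' t x h hh
    have h1 := hcB _ _ hD' t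
    have hD0' := hSD0 hD'
    have h2 := ts_sd hR (σ := 5 / 4) (by norm_num) (by norm_num) (by norm_num)
      (by have := hκ0 (5 / 8); positivity) h1 x h hh
    refine h2.trans ?_
    apply mul_le_mul_of_nonneg_right _ (by positivity)
    calc _ = C2 * D' := by rw [hC2]; ring
      _ ≤ _ := mul_le_mul_of_nonneg_right (by linarith) hD0'
  · intro x t
    have hb : ∀ n, ‖c n t * (-(Real.cos (frq R n * x) * frq R n) * frq R n)‖ ≤
        P * |(n:ℝ)| ^ (-(5 / 4) : ℝ) := by
      intro n
      rw [Real.norm_eq_abs, abs_mul, abs_mul, abs_neg, abs_mul]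
      refine le_trans ?_ (hωc t n)
      rw [mul_comm (frq R n ^ 2)]
      apply mul_le_mul_of_nonneg_left _ (abs_nonneg _)
      rw [mul_assoc, ← sq, sq_abs]
      exact mul_le_of_le_one_left (by positivity) (Real.abs_cos_le_one _)
    have h2 := tsum_of_norm_bounded (hz54.hasSum.mul_left P) hb
    rw [Real.norm_eq_abs] at h2
    refine h2.trans ?_
    calc _ = C3 * D := by rw [hC3, hP]; unfold zc; ring
      _ ≤ _ := mul_le_mul_of_nonneg_right (by linarith) hD0

end

section

lemma sdq_tendsto {w wx : ℝ → ℝ} {x wxx : ℝ} (hw : ∀ y, HasDerivAt w (wx y) y)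
    (hwx : HasDerivAt wx wxx x) :
    Tendsto (fun h => (w (x + h) + w (x - h) - 2 * w x) / h ^ 2) (𝓝[>] 0) (𝓝 wxx) := by
  have hc : Continuous w := continuous_iff_continuousAt.2 fun y => (hw y).continuousAt
  refine HasDerivAt.lhopital_zero_nhdsGT (f' := fun h => wx (x + h) - wx (x - h))
    (g' := fun h => 2 * h) ?_ ?_ ?_ ?_ ?_ ?_
  · refine Eventually.of_forall fun h => ?_
    have h1 : HasDerivAt (fun h => w (x + h)) (wx (x + h)) h := by
      simpa using (hw (x + h)).comp_const_add x h
    have h2 : HasDerivAt (fun h => w (x - h)) (-wx (x - h)) h := by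
      simpa using (hw (x - h)).comp_const_sub x h
    simpa [sub_eq_add_neg] using (h1.add h2).sub_const (2 * w x)
  · refine Eventually.of_forall fun h => ?_
    simpa using (hasDerivAt_pow 2 h)
  · filter_upwards [self_mem_nhdsWithin] with h hh
    have : (0:ℝ) < h := hh
    positivity
  · have : Tendsto (fun h => w (x + h) + w (x - h) - 2 * w x) (𝓝 0)
        (𝓝 (w (x + 0) + w (x - 0) - 2 * w x)) := by
      apply Continuous.tendsto; fun_prop
    refine (this.mono_left nhdsWithin_le_nhds).trans (le_of_eq ?_)
    congr 1; rw [add_zero, sub_zero]; ring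
  · have : Tendsto (fun h : ℝ => h ^ 2) (𝓝 0) (𝓝 (0 ^ 2)) := by
      apply Continuous.tendsto; fun_prop
    refine (this.mono_left nhdsWithin_le_nhds).trans (le_of_eq ?_)
    congr 1; simp
  · have h1 := hasDerivAt_iff_tendsto_slope_zero.1 hwx
    have hp : Tendsto (fun h : ℝ => h) (𝓝[>] 0) (𝓝[≠] 0) :=
      tendsto_id.mono_left (nhdsWithin_mono _ fun y hy => ne_of_gt hy)
    have hn : Tendsto (fun h : ℝ => -h) (𝓝[>] 0) (𝓝[≠] 0) := by
      refine tendsto_nhdsWithin_iff.2 ⟨?_, ?_⟩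
      · have : Tendsto (fun h : ℝ => -h) (𝓝 0) (𝓝 (-0)) := by
          apply Continuous.tendsto; fun_prop
        rw [neg_zero] at this
        exact this.mono_left nhdsWithin_le_nhds
      · filter_upwards [self_mem_nhdsWithin] with h hh
        have : (0:ℝ) < h := hh
        simp; exact this.ne'
    have h2 := ((h1.comp hp).add (h1.comp hn)).div_const 2
    have e : (wxx + wxx) / 2 = wxx := by ring
    rw [e] at h2
    refine h2.congr' ?_
    filter_upwards [self_mem_nhdsWithin] with h hh
    have : (0:ℝ) < h := hh
    simp only [Function.comp, smul_eq_mul]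
    field_simp
    rw [← sub_eq_add_neg]
    ring

lemma mp0 {T a b : ℝ} (hT : 0 < T) {z : ℝ → ℝ → ℝ}
    (hz : Continuous fun p : ℝ × ℝ => z p.1 p.2) (hper : ∀ x t, z x (t + T) = z x t)
    (ha : ∀ t, 0 ≤ z a t) (hb : ∀ t, 0 ≤ z b t)
    (hmin : ∀ x ∈ Ioo a b, ∀ t, z x t < 0 → (∀ y ∈ Icc a b, ∀ τ, z x t ≤ z y τ) → False) :
    ∀ x ∈ Icc a b, ∀ t, 0 ≤ z x t := by
  intro x hx t
  by_contra hneg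
  push Not at hneg
  obtain ⟨p, hp, hpm⟩ := (isCompact_Icc.prod isCompact_Icc).exists_isMinOn
    (⟨(x, 0), hx, left_mem_Icc.2 hT.le⟩ : (Icc a b ×ˢ Icc 0 T).Nonempty) hz.continuousOn
  have hglob : ∀ y ∈ Icc a b, ∀ τ, z p.1 p.2 ≤ z y τ := by
    intro y hy τ
    obtain ⟨s, hs, e⟩ := Function.Periodic.exists_mem_Ico₀ (f := z y) (c := T) (hper y) hT τ
    rw [e]
    exact hpm (⟨hy, Ico_subset_Icc_self hs⟩ : (y, s) ∈ Icc a b ×ˢ Icc 0 T)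
  have hlt := (hglob x hx t).trans_lt hneg
  have h1 : p.1 ≠ a := fun e => by rw [e] at hlt; exact absurd (ha _) (not_le.2 hlt)
  have h2 : p.1 ≠ b := fun e => by rw [e] at hlt; exact absurd (hb _) (not_le.2 hlt)
  exact hmin p.1 ⟨lt_of_le_of_ne hp.1.1 h1.symm, lt_of_le_of_ne hp.1.2 h2⟩ p.2 hlt hglob

lemma mp1 {T a b L : ℝ} (hT : 0 < T) (hL : 0 < L) {z zx zxx zt : ℝ → ℝ → ℝ}
    (hz : Continuous fun p : ℝ × ℝ => z p.1 p.2) (hper : ∀ x t, z x (t + T) = z x t)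
    (ha : ∀ t, 0 ≤ z a t) (hb : ∀ t, 0 ≤ z b t)
    (hx : ∀ x t, HasDerivAt (fun y => z y t) (zx x t) x)
    (hxx : ∀ x t, HasDerivAt (fun y => zx y t) (zxx x t) x)
    (ht : ∀ x t, HasDerivAt (fun τ => z x τ) (zt x t) t)
    (hpde : ∀ x ∈ Ioo a b, ∀ t, zxx x t - L * z x t ≤ zt x t) :
    ∀ x ∈ Icc a b, ∀ t, 0 ≤ z x t := by
  refine mp0 hT hz hper ha hb ?_
  intro x hxI t hneg hmin
  have h1 : zt x t = 0 := by
    refine IsLocalMin.hasDerivAt_eq_zero ?_ (ht x t)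
    exact Eventually.of_forall fun τ => hmin x (Ioo_subset_Icc_self hxI) τ
  have h2 : 0 ≤ zxx x t := by
    refine ge_of_tendsto (sdq_tendsto (fun y => hx y t) (hxx x t)) ?_
    have e1 : ∀ᶠ h in 𝓝[>] (0:ℝ), x + h ∈ Ioo a b := by
      have : Tendsto (fun h : ℝ => x + h) (𝓝 0) (𝓝 (x + 0)) := by
        apply Continuous.tendsto; fun_prop
      rw [add_zero] at this
      exact (this.mono_left nhdsWithin_le_nhds) (isOpen_Ioo.mem_nhds hxI)
    have e2 : ∀ᶠ h in 𝓝[>] (0:ℝ), x - h ∈ Ioo a b := by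
      have : Tendsto (fun h : ℝ => x - h) (𝓝 0) (𝓝 (x - 0)) := by
        apply Continuous.tendsto; fun_prop
      rw [sub_zero] at this
      exact (this.mono_left nhdsWithin_le_nhds) (isOpen_Ioo.mem_nhds hxI)
    filter_upwards [e1, e2] with h h1 h2
    have a1 := hmin _ (Ioo_subset_Icc_self h1) t
    have a2 := hmin _ (Ioo_subset_Icc_self h2) t
    apply div_nonneg _ (sq_nonneg h)
    linarith
  have h3 := hpde x hxI t
  nlinarith

lemma rsym_reduce {R : ℝ} (hR : 0 < R) (x : ℝ) : ∃ y ∈ Icc (-R) R, ∃ s : ℝ, |s| = 1 ∧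
    ∀ F : ℝ → ℝ, RSym R F → F x = s * F y := by
  have h4 : (0:ℝ) < 4 * R := by linarith
  obtain ⟨n, hn, -⟩ := existsUnique_add_zsmul_mem_Ico h4 x (-R)
  have hper : ∀ F : ℝ → ℝ, RSym R F → F (x + n • (4 * R)) = F x := fun F hF =>
    (Function.Periodic.zsmul (f := F) (c := 4 * R) (fun x => hF.per x) n) x
  set y := x + n • (4 * R)
  rcases le_total y R with h | h
  · exact ⟨y, ⟨hn.1, h⟩, 1, abs_one, fun F hF => by rw [one_mul, hper F hF]⟩
  · refine ⟨2 * R - y, ⟨by linarith [hn.2], by linarith⟩, -1, by simp, fun F hF => ?_⟩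
    rw [hF.odd, ← hper F hF]; ring

end

section

/-- hypotheses on the (odd, globally Lipschitz) nonlinearity -/
structure GH (T Λ M0 Cg K : ℝ) (G : ℝ → ℝ → ℝ) (q : ℝ → ℝ) : Prop where
  hT : 0 < T
  hΛ : 0 < Λ
  hCg : 0 ≤ Cg
  cont : Continuous fun p : ℝ × ℝ => G p.1 p.2
  per : ∀ t w, G (t + T) w = G t w
  odd : ∀ t w, G t (-w) = -G t w
  lip : ∀ t a b, |G t a - G t b| ≤ Λ * |a - b|
  bd : ∀ t w, |G t w| ≤ M0
  taylor : ∃ k : ℝ → ℝ → ℝ, ∀ t a b, |a| ≤ K → |b| ≤ K →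
    |G t b - G t a - k t a * (b - a)| ≤ Cg * (b - a) ^ 2
  qper : ∀ t, q (t + T) = q t
  qpos : ∀ t, 0 < q t
  qK : ∀ t, q t ≤ K
  qode : ∀ t, HasDerivAt q (G t (q t)) t

/-- properties of the subsolution -/
structure VH (R T : ℝ) (G : ℝ → ℝ → ℝ) (q : ℝ → ℝ) (v : ℝ → ℝ → ℝ) (Hv Dv : ℝ) : Prop where
  cont : Continuous fun p : ℝ × ℝ => v p.1 p.2
  per : ∀ x t, v x (t + T) = v x t
  sym : ∀ t, RSym R (fun x => v x t)
  nonneg : ∀ x ∈ Icc (-R) R, ∀ t, 0 ≤ v x t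
  le : ∀ x ∈ Icc (-R) R, ∀ t, v x t ≤ q t
  anti : ∀ t, AntitoneOn (fun x => v x t) (Icc 0 R)
  pos : ∀ t, 0 < v 0 t
  hol : ∀ t x y, |v x t - v y t| ≤ Hv * |x - y| ^ (5 / 8 : ℝ)
  sdb : SDB v (5 / 4) Dv
  test : ∀ (w : ℝ → ℝ → ℝ) (wx : ℝ → ℝ) (wxx wt x t : ℝ), x ∈ Ioo (-R) R →
    (∀ y, HasDerivAt (fun y => w y t) (wx y) y) → HasDerivAt wx wxx x →
    HasDerivAt (fun τ => w x τ) wt t →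
    (∀ y ∈ Icc (-R) R, ∀ τ, w x t - v x t ≤ w y τ - v y τ) → wt ≤ wxx + G t (v x t)

/-- the class in which we iterate -/
structure Cls (R T : ℝ) (q : ℝ → ℝ) (v : ℝ → ℝ → ℝ) (H D : ℝ) (u : ℝ → ℝ → ℝ) : Prop where
  cont : Continuous fun p : ℝ × ℝ => u p.1 p.2
  per : ∀ x t, u x (t + T) = u x t
  sym : ∀ t, RSym R (fun x => u x t)
  lo : ∀ x ∈ Icc (-R) R, ∀ t, v x t ≤ u x t
  hi : ∀ x ∈ Icc (-R) R, ∀ t, u x t ≤ q t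
  anti : ∀ t, AntitoneOn (fun x => u x t) (Icc 0 R)
  hol : ∀ t x y, |u x t - u y t| ≤ H * |x - y| ^ (5 / 8 : ℝ)
  sdb : SDB u (5 / 4) D

lemma RSym.atR {R : ℝ} {F : ℝ → ℝ} (h : RSym R F) : F R = 0 ∧ F (-R) = 0 := by
  have h1 := h.odd R
  rw [show 2 * R - R = R by ring] at h1
  have : F R = 0 := by linarith
  exact ⟨this, by rw [h.even, this]⟩

lemma gl_mono {T Λ M0 Cg K L : ℝ} {G : ℝ → ℝ → ℝ} {q : ℝ → ℝ} (hG : GH T Λ M0 Cg K G q)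
    (hL : Λ ≤ L) (t : ℝ) {a b : ℝ} (h : a ≤ b) : G t a + L * a ≤ G t b + L * b := by
  have h1 := abs_le.1 (hG.lip t a b)
  rw [abs_of_nonpos (by linarith : a - b ≤ 0)] at h1
  nlinarith [h1.2]

lemma gl_lip {T Λ M0 Cg K L : ℝ} {G : ℝ → ℝ → ℝ} {q : ℝ → ℝ} (hG : GH T Λ M0 Cg K G q)
    (hL : 0 ≤ L) (t a b : ℝ) : |(G t a + L * a) - (G t b + L * b)| ≤ (Λ + L) * |a - b| := by
  calc |(G t a + L * a) - (G t b + L * b)| = |(G t a - G t b) + L * (a - b)| := by ring_nf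
    _ ≤ |G t a - G t b| + |L * (a - b)| := abs_add_le _ _
    _ ≤ Λ * |a - b| + L * |a - b| := by
        rw [abs_mul, abs_of_nonneg hL]; linarith [hG.lip t a b]
    _ = _ := by ring

lemma g_mid {T Λ M0 Cg K : ℝ} {G : ℝ → ℝ → ℝ} {q : ℝ → ℝ} (hG : GH T Λ M0 Cg K G q)
    (t a b : ℝ) (ha : |a| ≤ K) (hb : |b| ≤ K) :
    |G t a + G t b - 2 * G t ((a + b) / 2)| ≤ Cg * (a - b) ^ 2 := by
  obtain ⟨k, hk⟩ := hG.taylor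
  have hm : |(a + b) / 2| ≤ K := by
    rw [abs_le] at *; constructor <;> linarith [ha.1, ha.2, hb.1, hb.2]
  have h1 := abs_le.1 (hk t _ a hm ha)
  have h2 := abs_le.1 (hk t _ b hm hb)
  have e1 : (a - (a + b) / 2) = (a - b) / 2 := by ring
  have e2 : (b - (a + b) / 2) = -((a - b) / 2) := by ring
  rw [e1] at h1
  rw [e2] at h2
  have := mul_nonneg hG.hCg (sq_nonneg (a - b))
  rw [abs_le]
  constructor <;> nlinarith [h1.1, h1.2, h2.1, h2.2]

variable {R T Λ M0 Cg K L Hv Dv H D : ℝ} {G : ℝ → ℝ → ℝ} {q : ℝ → ℝ} {v u : ℝ → ℝ → ℝ}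

lemma Cls.abs_le_K (hR : 0 < R) (hG : GH T Λ M0 Cg K G q) (hv : VH R T G q v Hv Dv)
    (hu : Cls R T q v H D u) (x t : ℝ) : |u x t| ≤ K := by
  obtain ⟨y, hy, s, hs, h⟩ := rsym_reduce hR x
  rw [h _ (hu.sym t), abs_mul, hs, one_mul]
  have h1 := hu.lo y hy t
  have h2 := hu.hi y hy t
  have h3 := hv.nonneg y hy t
  have h4 := hG.qK t
  rw [abs_of_nonneg (by linarith)]; linarith

lemma two_rpow_54 {h : ℝ} (hh : 0 ≤ h) : ((2 * h) ^ (5 / 8 : ℝ)) ^ 2 ≤ 4 * h ^ (5 / 4 : ℝ) := by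
  rw [← Real.rpow_natCast, ← Real.rpow_mul (by positivity)]
  norm_num
  rw [Real.mul_rpow (by norm_num) hh]
  have : (2:ℝ) ^ (5 / 4 : ℝ) ≤ 2 ^ (2:ℝ) :=
    Real.rpow_le_rpow_of_exponent_le (by norm_num) (by norm_num)
  norm_num at this
  exact mul_le_mul_of_nonneg_right this (by positivity)

lemma F_sdb54 (hR : 0 < R) (hG : GH T Λ M0 Cg K G q) (hv : VH R T G q v Hv Dv)
    (hu : Cls R T q v H D u) (hL : 0 ≤ L) :
    SDB (fun x t => G t (u x t) + L * u x t) (5 / 4) (4 * Cg * H ^ 2 + (Λ + L) * D) := by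
  intro t x h hh
  have hb := hu.abs_le_K hR hG hv
  set a := u (x + h) t
  set b := u (x - h) t
  have h1 := abs_le.1 (g_mid hG t a b (hb _ _) (hb _ _))
  have h2 := abs_le.1 (hG.lip t ((a + b) / 2) (u x t))
  have h3 := hu.sdb t x h hh
  have h3' := abs_le.1 h3
  have h4 : (a - b) ^ 2 ≤ H ^ 2 * (4 * h ^ (5 / 4 : ℝ)) := by
    have h5 := hu.hol t (x + h) (x - h)
    rw [show x + h - (x - h) = 2 * h by ring, abs_of_nonneg (by positivity : 0 ≤ 2 * h)] at h5
    rw [← sq_abs]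
    calc |a - b| ^ 2 ≤ (H * (2 * h) ^ (5 / 8 : ℝ)) ^ 2 := by gcongr
      _ = H ^ 2 * ((2 * h) ^ (5 / 8 : ℝ)) ^ 2 := by ring
      _ ≤ _ := mul_le_mul_of_nonneg_left (two_rpow_54 hh) (sq_nonneg _)
  have h6 : |(a + b) / 2 - u x t| ≤ D * h ^ (5 / 4 : ℝ) / 2 := by
    rw [show (a + b) / 2 - u x t = (a + b - 2 * u x t) / 2 by ring, abs_div, abs_two]
    linarith
  have h7 := mul_le_mul_of_nonneg_left h6 hG.hΛ.le
  have h8 := mul_le_mul_of_nonneg_left h4 hG.hCg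
  have h9 := mul_le_mul_of_nonneg_left h3'.1 hL
  have h10 := mul_le_mul_of_nonneg_left h3'.2 hL
  show |G t a + L * a + (G t b + L * b) - 2 * (G t (u x t) + L * u x t)| ≤ _
  rw [abs_le]
  constructor <;> nlinarith [h1.1, h1.2, h2.1, h2.2]

lemma F_sdb58 (hG : GH T Λ M0 Cg K G q) 
    (hu : Cls R T q v H D u) (hL : 0 ≤ L) :
    SDB (fun x t => G t (u x t) + L * u x t) (5 / 8) (2 * (Λ + L) * H) := by
  intro t x h hh
  have h1 := gl_lip hG hL t (u (x + h) t) (u x t)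
  have h2 := gl_lip hG hL t (u (x - h) t) (u x t)
  have h3 := hu.hol t (x + h) x
  have h4 := hu.hol t (x - h) x
  rw [show x + h - x = h by ring, abs_of_nonneg hh] at h3
  rw [show x - h - x = -h by ring, abs_neg, abs_of_nonneg hh] at h4
  have hp : 0 ≤ Λ + L := by linarith [hG.hΛ]
  have h5 := mul_le_mul_of_nonneg_left h3 hp
  have h6 := mul_le_mul_of_nonneg_left h4 hp
  have h7 := abs_le.1 (h1.trans h5)
  have h8 := abs_le.1 (h2.trans h6)
  rw [abs_le]
  constructor <;> linarith [h7.1, h7.2, h8.1, h8.2]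

/-- solves the linear problem with right side from `u`. -/
structure Stp (R T L : ℝ) (G : ℝ → ℝ → ℝ) (u u' upx upxx : ℝ → ℝ → ℝ) : Prop where
  cont : Continuous fun p : ℝ × ℝ => u' p.1 p.2
  per : ∀ x t, u' x (t + T) = u' x t
  sym : ∀ t, RSym R (fun x => u' x t)
  hx : ∀ x t, HasDerivAt (fun y => u' y t) (upx x t) x
  hxx : ∀ x t, HasDerivAt (fun y => upx y t) (upxx x t) x
  ht : ∀ x t, HasDerivAt (fun τ => u' x τ) (upxx x t - L * u' x t + (G t (u x t) + L * u x t)) t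

lemma stp_lo (hG : GH T Λ M0 Cg K G q) (hv : VH R T G q v Hv Dv)
    (hu : Cls R T q v H D u) (hL : Λ ≤ L) {u' upx upxx : ℝ → ℝ → ℝ}
    (hs : Stp R T L G u u' upx upxx) : ∀ x ∈ Icc (-R) R, ∀ t, v x t ≤ u' x t := by
  have := mp0 (a := -R) (b := R) hG.hT (z := fun x t => u' x t - v x t)
    (hs.cont.sub hv.cont) (fun x t => by simp only [hs.per, hv.per])
    (fun t => by rw [(hs.sym t).atR.2, (hv.sym t).atR.2]; simp)
    (fun t => by rw [(hs.sym t).atR.1, (hv.sym t).atR.1]; simp) ?_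
  · intro x hx t; linarith [this x hx t]
  intro x hx t hneg hmin
  have h1 := hv.test u' (fun y => upx y t) _ _ x t hx (fun y => hs.hx y t) (hs.hxx x t)
    (hs.ht x t) hmin
  have h2 := gl_mono hG hL t (hu.lo x (Ioo_subset_Icc_self hx) t)
  have : 0 < L := hG.hΛ.trans_le hL
  nlinarith

lemma stp_hi (hG : GH T Λ M0 Cg K G q)
    (hu : Cls R T q v H D u) (hL : Λ ≤ L) {u' upx upxx : ℝ → ℝ → ℝ}
    (hs : Stp R T L G u u' upx upxx) : ∀ x ∈ Icc (-R) R, ∀ t, u' x t ≤ q t := by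
  have hq : Continuous q := continuous_iff_continuousAt.2 fun y => (hG.qode y).continuousAt
  have := mp1 (a := -R) (b := R) hG.hT (hG.hΛ.trans_le hL) (z := fun x t => q t - u' x t)
    (zx := fun x t => - upx x t) (zxx := fun x t => -upxx x t)
    (zt := fun x t => G t (q t) - (upxx x t - L * u' x t + (G t (u x t) + L * u x t)))
    (by have := hs.cont; fun_prop) (fun x t => by simp only [hs.per, hG.qper])
    (fun t => by rw [(hs.sym t).atR.2]; linarith [hG.qpos t])
    (fun t => by rw [(hs.sym t).atR.1]; linarith [hG.qpos t])
    (fun x t => by simpa using (hs.hx x t).const_sub (q t))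
    (fun x t => (hs.hxx x t).neg)
    (fun x t => (hG.qode t).sub (hs.ht x t)) ?_
  · intro x hx t; linarith [this x hx t]
  intro x hx t
  have h2 := gl_mono hG hL t (hu.hi x (Ioo_subset_Icc_self hx) t)
  linarith

/-- reflected difference inequality on `[l,R]` -/
lemma refl_le (hu : Cls R T q v H D u) {l : ℝ} (hl : 0 ≤ l) {x : ℝ} (hx : x ∈ Icc l R) (t : ℝ) :
    u x t ≤ u (2 * l - x) t := by
  have ha := hu.anti t
  have he : ∀ x, u (-x) t = u x t := (hu.sym t).even
  rcases le_total 0 (2 * l - x) with h | h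
  · exact ha ⟨h, by linarith [hx.1, hx.2]⟩ ⟨by linarith [hx.1], hx.2⟩ (by linarith [hx.1])
  · rw [← he (2 * l - x)]
    exact ha ⟨by linarith, by linarith [hx.1, hx.2]⟩ ⟨by linarith [hx.1], hx.2⟩ (by linarith)

lemma stp_anti (hG : GH T Λ M0 Cg K G q) (hv : VH R T G q v Hv Dv)
    (hu : Cls R T q v H D u) (hL : Λ ≤ L) {u' upx upxx : ℝ → ℝ → ℝ}
    (hs : Stp R T L G u u' upx upxx) (t : ℝ) : AntitoneOn (fun x => u' x t) (Icc 0 R) := by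
  have hlo := stp_lo hG hv hu hL hs
  have key : ∀ l ∈ Icc 0 R, ∀ x ∈ Icc l R, ∀ t, 0 ≤ u' (2 * l - x) t - u' x t := by
    intro l hl
    refine mp1 (a := l) (b := R) hG.hT (hG.hΛ.trans_le hL)
      (z := fun x t => u' (2 * l - x) t - u' x t)
      (zx := fun x t => - upx (2 * l - x) t - upx x t)
      (zxx := fun x t => upxx (2 * l - x) t - upxx x t)
      (zt := fun x t => (upxx (2 * l - x) t - L * u' (2 * l - x) t +
        (G t (u (2 * l - x) t) + L * u (2 * l - x) t)) -
        (upxx x t - L * u' x t + (G t (u x t) + L * u x t)))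
      ?_ (fun x t => by simp only [hs.per]) ?_ ?_ ?_ ?_ (fun x t => (hs.ht _ t).sub (hs.ht x t)) ?_
    · have h1 := hs.cont
      have h2 : Continuous fun p : ℝ × ℝ => u' (2 * l - p.1) p.2 :=
        h1.comp (f := fun p : ℝ × ℝ => (2 * l - p.1, p.2)) (by fun_prop)
      exact h2.sub h1
    · intro t
      rw [show 2 * l - l = l by ring, sub_self]
    · intro t
      rw [(hs.sym t).atR.1, sub_zero]
      have hm : 2 * l - R ∈ Icc (-R) R := ⟨by linarith [hl.1], by linarith [hl.2]⟩
      exact (hv.nonneg _ hm t).trans (hlo _ hm t)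
    · intro x t
      have := (hs.hx (2 * l - x) t).comp_const_sub (2 * l) x
      exact this.sub (hs.hx x t)
    · intro x t
      have := (hs.hxx (2 * l - x) t).comp_const_sub (2 * l) x
      exact (this.neg.sub (hs.hxx x t)).congr_deriv (by ring)
    · intro x hx t
      have h1 := refl_le hu hl.1 (Ioo_subset_Icc_self hx) t
      have h2 := gl_mono hG hL t h1
      linarith
  intro x hx y hy hxy
  have := key ((x + y) / 2) ⟨by linarith [hx.1, hy.1], by linarith [hx.2, hy.2]⟩ y
    ⟨by linarith, hy.2⟩ t
  rw [show 2 * ((x + y) / 2) - y = x by ring] at this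
  show u' y t ≤ u' x t
  linarith

lemma stp_mono (hG : GH T Λ M0 Cg K G q) (hL : Λ ≤ L) {u₁ u₂ w wx wxx z zx zxx : ℝ → ℝ → ℝ}
    (h1 : Stp R T L G u₁ w wx wxx) (h2 : Stp R T L G u₂ z zx zxx)
    {ε : ℝ} (hF : ∀ x ∈ Icc (-R) R, ∀ t, G t (u₁ x t) + L * u₁ x t
      ≤ G t (u₂ x t) + L * u₂ x t + L * ε) (hε : 0 ≤ ε) :
    ∀ x ∈ Icc (-R) R, ∀ t, w x t ≤ z x t + ε := by
  have := mp1 (a := -R) (b := R) hG.hT (hG.hΛ.trans_le hL) (z := fun x t => (z x t - w x t) + ε)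
    (zx := fun x t => zx x t - wx x t) (zxx := fun x t => zxx x t - wxx x t)
    (zt := fun x t => (zxx x t - L * z x t + (G t (u₂ x t) + L * u₂ x t)) -
      (wxx x t - L * w x t + (G t (u₁ x t) + L * u₁ x t)))
    ((h2.cont.sub h1.cont).add continuous_const) (fun x t => by simp only [h1.per, h2.per])
    (fun t => by rw [(h1.sym t).atR.2, (h2.sym t).atR.2]; linarith)
    (fun t => by rw [(h1.sym t).atR.1, (h2.sym t).atR.1]; linarith)
    (fun x t => ((h2.hx x t).sub (h1.hx x t)).add_const _)
    (fun x t => (h2.hxx x t).sub (h1.hxx x t))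
    (fun x t => ((h2.ht x t).sub (h1.ht x t)).add_const _) ?_
  · intro x hx t; linarith [this x hx t]
  intro x hx t
  have := hF x (Ioo_subset_Icc_self hx) t
  linarith

end

section

section
variable {R T Λ M0 Cg K L Hv Dv H D : ℝ} {G : ℝ → ℝ → ℝ} {q : ℝ → ℝ} {v u : ℝ → ℝ → ℝ}

lemma step_exists (hR : 0 < R) (hG : GH T Λ M0 Cg K G q) (hv : VH R T G q v Hv Dv)
    (hL : Λ ≤ L) : ∃ H D E : ℝ, Cls R T q v H D v ∧ ∀ u, Cls R T q v H D u →
      ∃ u' upx upxx, Cls R T q v H D u' ∧ Stp R T L G u u' upx upxx ∧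
        ∀ x s t, |u' x s - u' x t| ≤ E * |s - t| := by
  have hL0 : 0 < L := hG.hΛ.trans_le hL
  obtain ⟨C, hC, hlin⟩ := lin hR hG.hT hL0
  set M := M0 + L * K with hM
  set H := max (C * M) Hv with hH
  set D := max (C * (2 * (Λ + L) * H)) Dv with hD
  set DF := 4 * Cg * H ^ 2 + (Λ + L) * D with hDF
  refine ⟨H, D, C * DF + L * K + M, ?_, ?_⟩
  · refine ⟨hv.cont, hv.per, hv.sym, fun _ _ _ => le_rfl, hv.le, hv.anti, ?_, ?_⟩
    · intro t x y
      exact (hv.hol t x y).trans (mul_le_mul_of_nonneg_right (le_max_right _ _) (by positivity))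
    · intro t x h hh
      exact (hv.sdb t x h hh).trans (mul_le_mul_of_nonneg_right (le_max_right _ _) (by positivity))
  intro u hu
  have hub := hu.abs_le_K hR hG hv
  have hFM : ∀ x t, |G t (u x t) + L * u x t| ≤ M := by
    intro x t
    refine (abs_add_le _ _).trans ?_
    rw [abs_mul, abs_of_pos hL0]
    exact add_le_add (hG.bd _ _) (mul_le_mul_of_nonneg_left (hub x t) hL0.le)
  obtain ⟨u', upx, upxx, h1, h2, h3, h4, h5, h6, h7, h8, h9⟩ :=
    hlin (fun x t => G t (u x t) + L * u x t) DF
    (by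
      have h1 := hG.cont
      have h2 := hu.cont
      have h3 : Continuous fun p : ℝ × ℝ => G p.2 (u p.1 p.2) :=
        h1.comp (f := fun p : ℝ × ℝ => (p.2, u p.1 p.2)) (by fun_prop)
      exact h3.add (continuous_const.mul h2))
    (fun x t => by simp only [hu.per, hG.per])
    (fun t => ⟨fun x => by simp only [(hu.sym t).even x], fun x => by
      have : u (2 * R - x) t = -u x t := (hu.sym t).odd x
      rw [this, hG.odd]; ring⟩)
    (F_sdb54 hR hG hv hu hL0.le)
  have hs : Stp R T L G u u' upx upxx := ⟨h1, h2, h3, h4, h5, h6⟩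
  have hcls : Cls R T q v H D u' := by
    refine ⟨h1, h2, h3, stp_lo hG hv hu hL hs, stp_hi hG hu hL hs, stp_anti hG hv hu hL hs, ?_, ?_⟩
    · intro t x y
      exact (h7 M hFM t x y).trans (mul_le_mul_of_nonneg_right (le_max_left _ _) (by positivity))
    · intro t x h hh
      exact (h8 _ (F_sdb58 hG hu hL0.le) t x h hh).trans
        (mul_le_mul_of_nonneg_right (le_max_left _ _) (by positivity))
  refine ⟨u', upx, upxx, hcls, hs, ?_⟩
  intro x s t
  have hb : ∀ τ ∈ (univ : Set ℝ), ‖upxx x τ - L * u' x τ + (G τ (u x τ) + L * u x τ)‖ ≤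
      C * DF + L * K + M := by
    intro τ _
    have a1 := h9 x τ
    have a2 := hcls.abs_le_K hR hG hv x τ
    have a3 := hFM x τ
    have a4 := mul_le_mul_of_nonneg_left a2 hL0.le
    rw [Real.norm_eq_abs]
    refine (abs_add_le _ _).trans (add_le_add ((abs_sub _ _).trans (add_le_add a1 ?_)) a3)
    rw [abs_mul, abs_of_pos hL0]; exact a4
  have := convex_univ.norm_image_sub_le_of_norm_hasDerivWithin_le
    (f := fun τ => u' x τ) (fun τ _ => (h6 x τ).hasDerivWithinAt) hb (mem_univ t) (mem_univ s)
  simpa [Real.norm_eq_abs] using this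

theorem iter_exists (hR : 0 < R) (hG : GH T Λ M0 Cg K G q) (hv : VH R T G q v Hv Dv)
    (hL : Λ ≤ L) : ∃ (H D : ℝ) (U Ux Uxx : ℝ → ℝ → ℝ), Cls R T q v H D U ∧
      Stp R T L G U U Ux Uxx := by
  have hL0 : 0 < L := hG.hΛ.trans_le hL
  obtain ⟨H, D, E, hv0, hstep⟩ := step_exists hR hG hv hL
  choose! S Sx Sxx hS1 hS2 hS3 using hstep
  set w : ℕ → ℝ → ℝ → ℝ := fun n => S^[n] v with hw
  have hwS : ∀ n, w (n + 1) = S (w n) := fun n => Function.iterate_succ_apply' S n v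
  have hwc : ∀ n, Cls R T q v H D (w n) := by
    intro n
    induction n with
    | zero => exact hv0
    | succ n ih => rw [hwS]; exact hS1 _ ih
  have hmono1 : ∀ n, ∀ x ∈ Icc (-R) R, ∀ t, w n x t ≤ w (n + 1) x t := by
    intro n
    induction n with
    | zero => intro x hx t; exact (hwc 1).lo x hx t
    | succ n ih =>
      intro x hx t
      have := stp_mono hG hL (hS2 _ (hwc n)) (hS2 _ (hwc (n + 1))) (ε := 0)
        (fun x hx t => by
          have := gl_mono hG hL t (ih x hx t)
          linarith) le_rfl x hx t
      rw [← hwS, ← hwS, add_zero] at this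
      exact this
  have hmono : ∀ x ∈ Icc (-R) R, ∀ t, Monotone fun n => w n x t := fun x hx t =>
    monotone_nat_of_le_succ fun n => hmono1 n x hx t
  have hconv : ∀ x t, ∃ l, Tendsto (fun n => w n x t) atTop (𝓝 l) := by
    intro x t
    obtain ⟨y, hy, s, hs, h⟩ := rsym_reduce hR x
    have : ∃ l, Tendsto (fun n => w n y t) atTop (𝓝 l) :=
      ⟨_, tendsto_atTop_ciSup (hmono y hy t) ⟨q t, by
        rintro _ ⟨n, rfl⟩; exact (hwc n).hi y hy t⟩⟩
    obtain ⟨l, hl⟩ := this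
    refine ⟨s * l, ?_⟩
    refine (hl.const_mul s).congr fun n => ?_
    exact (h _ ((hwc n).sym t)).symm
  choose U hU using hconv
  have hU1 : ∀ x t, Tendsto (fun n => w (n + 1) x t) atTop (𝓝 (U x t)) := fun x t =>
    (hU x t).comp (tendsto_add_atTop_nat 1)
  have hUh : ∀ t x y, |U x t - U y t| ≤ H * |x - y| ^ (5 / 8 : ℝ) := fun t x y =>
    le_of_tendsto ((hU x t).sub (hU y t)).abs (Eventually.of_forall fun n => (hwc n).hol t x y)
  have hUt : ∀ x s t, |U x s - U x t| ≤ E * |s - t| := fun x s t =>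
    le_of_tendsto ((hU1 x s).sub (hU1 x t)).abs
      (Eventually.of_forall fun n => by rw [hwS]; exact hS3 _ (hwc n) x s t)
  have hUc : Continuous fun p : ℝ × ℝ => U p.1 p.2 := by
    rw [continuous_iff_continuousAt]
    intro p
    have h1 : Tendsto (fun r : ℝ × ℝ => H * |r.1 - p.1| ^ (5 / 8 : ℝ) + E * |r.2 - p.2|)
        (𝓝 p) (𝓝 (H * |p.1 - p.1| ^ (5 / 8 : ℝ) + E * |p.2 - p.2|)) := by
      apply Continuous.tendsto
      have : Continuous fun r : ℝ × ℝ => |r.1 - p.1| ^ (5 / 8 : ℝ) :=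
        Continuous.rpow_const (by fun_prop) (fun _ => Or.inr (by norm_num))
      fun_prop
    rw [sub_self, sub_self, abs_zero, mul_zero, Real.zero_rpow (by norm_num), mul_zero,
      add_zero] at h1
    rw [ContinuousAt, tendsto_iff_dist_tendsto_zero]
    refine squeeze_zero (fun _ => dist_nonneg) (fun r => ?_) h1
    rw [Real.dist_eq]
    calc |U r.1 r.2 - U p.1 p.2| = |(U r.1 r.2 - U p.1 r.2) + (U p.1 r.2 - U p.1 p.2)| := by
          ring_nf
      _ ≤ _ := (abs_add_le _ _).trans (add_le_add (hUh _ _ _) (hUt _ _ _))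
  have hUC : Cls R T q v H D U := by
    refine ⟨hUc, ?_, ?_, ?_, ?_, ?_, hUh, ?_⟩
    · intro x t
      exact tendsto_nhds_unique (hU x (t + T))
        ((hU x t).congr fun n => ((hwc n).per x t).symm)
    · intro t
      constructor
      · intro x
        exact tendsto_nhds_unique (hU (-x) t)
          ((hU x t).congr fun n => (((hwc n).sym t).even x).symm)
      · intro x
        exact tendsto_nhds_unique (hU (2 * R - x) t)
          ((hU x t).neg.congr fun n => (((hwc n).sym t).odd x).symm)
    · intro x hx t
      exact ge_of_tendsto' (hU x t) fun n => (hwc n).lo x hx t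
    · intro x hx t
      exact le_of_tendsto' (hU x t) fun n => (hwc n).hi x hx t
    · intro t x hx y hy hxy
      exact le_of_tendsto_of_tendsto' (hU y t) (hU x t) fun n => (hwc n).anti t hx hy hxy
    · intro t x h hh
      exact le_of_tendsto' ((((hU _ t).add (hU _ t)).sub ((hU x t).const_mul 2)).abs)
        fun n => (hwc n).sdb t x h hh
  -- uniform convergence
  have hunif : TendstoUniformlyOn (fun n (p : ℝ × ℝ) => w n p.1 p.2) (fun p => U p.1 p.2) atTop
      (Icc (-R) R ×ˢ Icc 0 T) :=
    Monotone.tendstoUniformlyOn_of_forall_tendsto (isCompact_Icc.prod isCompact_Icc)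
      (fun n => (hwc n).cont.continuousOn) (fun p hp => hmono p.1 hp.1 p.2)
      hUc.continuousOn (fun p _ => hU p.1 p.2)
  have hunif' : ∀ ε > 0, ∀ᶠ n in atTop, ∀ x ∈ Icc (-R) R, ∀ t, |w n x t - U x t| ≤ ε := by
    intro ε hε
    filter_upwards [Metric.tendstoUniformlyOn_iff.1 hunif ε hε] with n hn x hx t
    obtain ⟨s, hs, e⟩ := Function.Periodic.exists_mem_Ico₀ (f := fun t => w n x t - U x t) (c := T)
      (fun t => by simp only [(hwc n).per, hUC.per]) hG.hT t
    rw [e]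
    have := hn (x, s) ⟨hx, Ico_subset_Icc_self hs⟩
    rw [dist_comm, Real.dist_eq] at this
    exact this.le
  have hUS := hS2 U hUC
  have heq : ∀ x ∈ Icc (-R) R, ∀ t, S U x t = U x t := by
    intro x hx t
    refine tendsto_nhds_unique (f := fun n => w (n + 1) x t) ?_ (hU1 x t)
    rw [Metric.tendsto_atTop]
    intro ε hε
    have hΛL : 0 < Λ + L := by linarith [hG.hΛ]
    obtain ⟨N, hN⟩ := eventually_atTop.1 (hunif' (L * (ε / 2) / (Λ + L)) (by positivity))
    refine ⟨N, fun n hn => ?_⟩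
    have hF : ∀ x ∈ Icc (-R) R, ∀ t, |(G t (w n x t) + L * w n x t) - (G t (U x t) + L * U x t)|
        ≤ L * (ε / 2) := by
      intro x hx t
      refine (gl_lip hG hL0.le t _ _).trans ?_
      have := mul_le_mul_of_nonneg_left (hN n hn x hx t) hΛL.le
      rwa [mul_div_cancel₀ _ hΛL.ne'] at this
    have h1 := stp_mono hG hL (hS2 _ (hwc n)) hUS (ε := ε / 2)
      (fun x hx t => by linarith [(abs_le.1 (hF x hx t)).2]) (by linarith) x hx t
    have h2 := stp_mono hG hL hUS (hS2 _ (hwc n)) (ε := ε / 2)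
      (fun x hx t => by linarith [(abs_le.1 (hF x hx t)).1]) (by linarith) x hx t
    rw [hwS, Real.dist_eq, abs_lt]
    constructor <;> linarith
  have hfun : S U = U := by
    ext x t
    obtain ⟨y, hy, s, hs, h⟩ := rsym_reduce hR x
    rw [h _ (hUS.sym t), h _ (hUC.sym t), heq y hy t]
  rw [hfun] at hUS
  exact ⟨H, D, U, _, _, hUC, hUS⟩
end

end

section

lemma exists_pos_lb {T : ℝ} (hT : 0 < T) {g : ℝ → ℝ} (hg : Continuous g)
    (hper : ∀ t, g (t + T) = g t) (hpos : ∀ t, 0 < g t) : ∃ δ > 0, ∀ t, δ ≤ g t := by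
  obtain ⟨t₀, h⟩ := exists_max_periodic hT hg.neg (fun t => by simp [hper])
  exact ⟨g t₀, hpos t₀, fun t => by have := h t; simp only [Pi.neg_apply] at this; linarith⟩

lemma sinh_barrier {T a b L δ : ℝ} (hT : 0 < T) (hL : 0 < L) (hab : a < b) 
    {z zx zxx zt : ℝ → ℝ → ℝ}
    (hz : Continuous fun p : ℝ × ℝ => z p.1 p.2) (hper : ∀ x t, z x (t + T) = z x t)
    (ha : ∀ t, 0 ≤ z a t) (hb : ∀ t, δ ≤ z b t)
    (hx : ∀ x t, HasDerivAt (fun y => z y t) (zx x t) x)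
    (hxx : ∀ x t, HasDerivAt (fun y => zx y t) (zxx x t) x)
    (ht : ∀ x t, HasDerivAt (fun τ => z x τ) (zt x t) t)
    (hpde : ∀ x ∈ Ioo a b, ∀ t, zxx x t - L * z x t ≤ zt x t) :
    ∀ x ∈ Icc a b, ∀ t, δ / Real.sinh (√L * (b - a)) * Real.sinh (√L * (x - a)) ≤ z x t := by
  set κ := √L
  have hκ : 0 < κ := Real.sqrt_pos.2 hL
  have hκ2 : κ * κ = L := Real.mul_self_sqrt hL.le
  have hs : 0 < Real.sinh (κ * (b - a)) := Real.sinh_pos_iff.2 (mul_pos hκ (by linarith))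
  set c := δ / Real.sinh (κ * (b - a))
  have hl : ∀ x, HasDerivAt (fun y => κ * (y - a)) κ x := fun x => by
    simpa using ((hasDerivAt_id x).sub_const a).const_mul κ
  have := mp1 (a := a) (b := b) hT hL (z := fun x t => z x t - c * Real.sinh (κ * (x - a)))
    (zx := fun x t => zx x t - c * (Real.cosh (κ * (x - a)) * κ))
    (zxx := fun x t => zxx x t - c * (Real.sinh (κ * (x - a)) * κ * κ)) (zt := zt)
    (hz.sub (by fun_prop)) (fun x t => by simp only [hper])
    (fun t => by simpa using ha t)
    (fun t => by
      have := hb t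
      show 0 ≤ z b t - δ / Real.sinh (κ * (b - a)) * Real.sinh (κ * (b - a))
      rw [div_mul_cancel₀ _ hs.ne']; linarith)
    (fun x t => (hx x t).sub ((hl x).sinh.const_mul c))
    (fun x t => (hxx x t).sub (((hl x).cosh.mul_const κ).const_mul c))
    (fun x t => (ht x t).sub_const _)
    (fun x hx t => by
      have := hpde x hx t
      have e : c * (Real.sinh (κ * (x - a)) * κ * κ) = L * (c * Real.sinh (κ * (x - a))) := by
        rw [← hκ2]; ring
      rw [e]; linarith)
  intro x hx t
  linarith [this x hx t]

lemma sinh_barrier_pos {T a b L : ℝ} (hT : 0 < T) (hL : 0 < L) (hab : a < b) 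
    {z zx zxx zt : ℝ → ℝ → ℝ}
    (hz : Continuous fun p : ℝ × ℝ => z p.1 p.2) (hper : ∀ x t, z x (t + T) = z x t)
    (ha : ∀ t, 0 ≤ z a t) (hb : ∀ t, 0 < z b t)
    (hx : ∀ x t, HasDerivAt (fun y => z y t) (zx x t) x)
    (hxx : ∀ x t, HasDerivAt (fun y => zx y t) (zxx x t) x)
    (ht : ∀ x t, HasDerivAt (fun τ => z x τ) (zt x t) t)
    (hpde : ∀ x ∈ Ioo a b, ∀ t, zxx x t - L * z x t ≤ zt x t) :
    ∃ c > 0, ∀ x ∈ Icc a b, ∀ t, c * (x - a) ≤ z x t := by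
  obtain ⟨δ, hδ, hδz⟩ := exists_pos_lb hT (g := z b) (by fun_prop) (hper b) hb
  have h := sinh_barrier hT hL hab hz hper ha hδz hx hxx ht hpde
  have hκ : 0 < √L := Real.sqrt_pos.2 hL
  have hs : 0 < Real.sinh (√L * (b - a)) := Real.sinh_pos_iff.2 (mul_pos hκ (by linarith))
  refine ⟨δ / Real.sinh (√L * (b - a)) * √L, by positivity, fun x hx t => ?_⟩
  refine le_trans ?_ (h x hx t)
  rw [mul_assoc]
  apply mul_le_mul_of_nonneg_left _ (by positivity)
  exact Real.self_le_sinh_iff.2 (mul_nonneg hκ.le (by linarith [hx.1]))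

section
variable {R T Λ M0 Cg K L Hv Dv H D : ℝ} {G : ℝ → ℝ → ℝ} {q : ℝ → ℝ} {v u : ℝ → ℝ → ℝ}

lemma GH.zero (hG : GH T Λ M0 Cg K G q) (t : ℝ) : G t 0 = 0 := by
  have := hG.odd t 0
  rw [neg_zero] at this
  linarith

theorem strictness (hR : 0 < R) (hG : GH T Λ M0 Cg K G q) (hv : VH R T G q v Hv Dv)
    (hL : Λ ≤ L) {u ux uxx : ℝ → ℝ → ℝ} (hu : Cls R T q v H D u)
    (hs : Stp R T L G u u ux uxx) :
    (∀ x ∈ Ioo (-R) R, ∀ t, 0 < u x t ∧ u x t < q t) ∧ ∀ x ∈ Ioo 0 R, ∀ t, ux x t < 0 := by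
  have hL0 : 0 < L := hG.hΛ.trans_le hL
  have hq : Continuous q := continuous_iff_continuousAt.2 fun y => (hG.qode y).continuousAt
  have hu0 : ∀ x ∈ Icc (-R) R, ∀ t, 0 ≤ u x t := fun x hx t =>
    (hv.nonneg x hx t).trans (hu.lo x hx t)
  -- positivity on the left half
  have hpos1 : ∀ x ∈ Ioc (-R) 0, ∀ t, 0 < u x t := by
    obtain ⟨c, hc, h⟩ := sinh_barrier_pos (a := -R) (b := 0) hG.hT hL0 (by linarith) hs.cont hs.per
      (fun t => by rw [(hs.sym t).atR.2])
      (fun t => (hv.pos t).trans_le (hu.lo 0 ⟨by linarith, by linarith⟩ t))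
      hs.hx hs.hxx hs.ht (fun x hx t => by
        have := gl_mono hG hL t (hu0 x ⟨hx.1.le, by linarith [hx.2]⟩ t)
        rw [hG.zero] at this
        linarith)
    intro x hx t
    exact (mul_pos hc (by linarith [hx.1])).trans_le (h x ⟨hx.1.le, hx.2⟩ t)
  have hpos : ∀ x ∈ Ioo (-R) R, ∀ t, 0 < u x t := by
    intro x hx t
    rcases le_total x 0 with h | h
    · exact hpos1 x ⟨hx.1, h⟩ t
    · have e : u (-x) t = u x t := (hs.sym t).even x
      rw [← e]
      exact hpos1 (-x) ⟨by linarith [hx.2], by linarith⟩ t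
  refine ⟨fun x hx t => ⟨hpos x hx t, ?_⟩, ?_⟩
  · obtain ⟨c, hc, h⟩ := sinh_barrier_pos (a := -R) (b := R) hG.hT hL0 (by linarith)
      (z := fun x t => q t - u x t)
      (zx := fun x t => - ux x t) (zxx := fun x t => -uxx x t)
      (zt := fun x t => G t (q t) - (uxx x t - L * u x t + (G t (u x t) + L * u x t)))
      (by have := hs.cont; fun_prop) (fun x t => by simp only [hs.per, hG.qper])
      (fun t => by rw [(hs.sym t).atR.2]; linarith [hG.qpos t])
      (fun t => by rw [(hs.sym t).atR.1]; linarith [hG.qpos t])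
      (fun x t => by simpa using (hs.hx x t).const_sub (q t))
      (fun x t => (hs.hxx x t).neg)
      (fun x t => (hG.qode t).sub (hs.ht x t)) (by
        intro x hx t
        have h2 := gl_mono hG hL t (hu.hi x (Ioo_subset_Icc_self hx) t)
        linarith)
    have := h x (Ioo_subset_Icc_self hx) t
    have := mul_pos hc (by linarith [hx.1] : 0 < x - -R)
    linarith
  · intro l hl t
    have hd : ∀ x t, HasDerivAt (fun x => u (2 * l - x) t - u x t)
        (- ux (2 * l - x) t - ux x t) x := fun x t =>
      ((hs.hx (2 * l - x) t).comp_const_sub (2 * l) x).sub (hs.hx x t)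
    obtain ⟨c, hc, h⟩ := sinh_barrier_pos (a := l) (b := R) hG.hT hL0 hl.2
      (z := fun x t => u (2 * l - x) t - u x t)
      (zx := fun x t => - ux (2 * l - x) t - ux x t)
      (zxx := fun x t => uxx (2 * l - x) t - uxx x t)
      (zt := fun x t => (uxx (2 * l - x) t - L * u (2 * l - x) t +
        (G t (u (2 * l - x) t) + L * u (2 * l - x) t)) -
        (uxx x t - L * u x t + (G t (u x t) + L * u x t)))
      (by
        have h1 := hs.cont
        have h2 : Continuous fun p : ℝ × ℝ => u (2 * l - p.1) p.2 :=
          h1.comp (f := fun p : ℝ × ℝ => (2 * l - p.1, p.2)) (by fun_prop)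
        exact h2.sub h1) (fun x t => by simp only [hs.per])
      (fun t => by rw [show 2 * l - l = l by ring, sub_self])
      (fun t => by
        rw [(hs.sym t).atR.1, sub_zero]
        exact hpos _ ⟨by linarith [hl.1], by linarith [hl.2]⟩ t)
      hd (fun x t =>
        (((hs.hxx (2 * l - x) t).comp_const_sub (2 * l) x).neg.sub (hs.hxx x t)).congr_deriv
          (by ring))
      (fun x t => (hs.ht _ t).sub (hs.ht x t))
      (fun x hx t => by
        have h1 := refl_le hu hl.1.le (Ioo_subset_Icc_self hx) t
        have h2 := gl_mono hG hL t h1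
        linarith)
    have hd2 := (hd l t).sub (((hasDerivAt_id l).sub_const l).const_mul c)
    rw [show 2 * l - l = l by ring, mul_one] at hd2
    have h3 := hd2.hasDerivWithinAt (s := Ioi l)
    rw [hasDerivWithinAt_iff_tendsto_slope' (by simp)] at h3
    have h4 : 0 ≤ -ux l t - ux l t - c := by
      refine ge_of_tendsto h3 ?_
      filter_upwards [Ioo_mem_nhdsGT hl.2] with y hy
      have := h y ⟨hy.1.le, hy.2.le⟩ t
      rw [slope_def_field]
      apply div_nonneg _ (by linarith [hy.1])
      have e : (2 * l - l) = l := by ring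
      simp only [Pi.sub_apply, id, e]
      linarith
    linarith
end

end

section

section
variable {T Λ M0 Cg K : ℝ} {G : ℝ → ℝ → ℝ} {q : ℝ → ℝ}

lemma GH.lipOn (hG : GH T Λ M0 Cg K G q) (t : ℝ) (s : Set ℝ) :
    LipschitzOnWith ⟨Λ, hG.hΛ.le⟩ (G t) s :=
  LipschitzOnWith.of_dist_le_mul fun a _ b _ => by
    rw [Real.dist_eq, Real.dist_eq]; exact hG.lip t a b

lemma loc_sol (hG : GH T Λ M0 Cg K G q) (a : ℝ) (N : ℕ) : ∃ y : ℝ → ℝ, y 0 = a ∧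
    ∀ t ∈ Ioo (-(N:ℝ) - 1) (N + 1), HasDerivAt y (G t (y t)) t := by
  have hM0 : 0 ≤ M0 := (abs_nonneg _).trans (hG.bd 0 0)
  have hN : (0:ℝ) ≤ N := Nat.cast_nonneg N
  have h0 : (0:ℝ) ∈ Icc (-(N:ℝ) - 1) (N + 1) := ⟨by linarith, by linarith⟩
  have hp : IsPicardLindelof G (⟨0, h0⟩ : Icc (-(N:ℝ) - 1) (N + 1)) a
      ⟨M0 * (N + 1), by positivity⟩ 0 ⟨M0, hM0⟩ ⟨Λ, hG.hΛ.le⟩ := by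
    constructor
    · intro t _; exact hG.lipOn t _
    · intro x _
      have := hG.cont
      exact (this.comp (f := fun t => (t, x)) (by fun_prop)).continuousOn
    · intro t _ x _; exact hG.bd t x
    · show M0 * max ((N:ℝ) + 1 - 0) (0 - (-(N:ℝ) - 1)) ≤ M0 * (N + 1) - 0
      rw [show (0:ℝ) - (-(N:ℝ) - 1) = N + 1 by ring, sub_zero, sub_zero, max_self]
  obtain ⟨y, hy0, hy⟩ := hp.exists_eq_forall_mem_Icc_hasDerivWithinAt₀
  refine ⟨y, hy0, fun t ht => ?_⟩
  exact (hy t (Ioo_subset_Icc_self ht)).hasDerivAt (Icc_mem_nhds ht.1 ht.2)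

lemma glob_sol (hG : GH T Λ M0 Cg K G q) (a : ℝ) : ∃ y : ℝ → ℝ, y 0 = a ∧
    ∀ t, HasDerivAt y (G t (y t)) t := by
  choose y hy0 hy using fun N => loc_sol hG a N
  have hag : ∀ N M : ℕ, N ≤ M → ∀ t ∈ Ioo (-(N:ℝ) - 1) (N + 1), y N t = y M t := by
    intro N M hNM
    have hNM' : (N:ℝ) ≤ M := by exact_mod_cast hNM
    have hN : (0:ℝ) ≤ N := Nat.cast_nonneg N
    refine ODE_solution_unique_of_mem_Ioo (v := G) (s := fun _ => univ) (t₀ := 0)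
      (fun t _ => hG.lipOn t _) ⟨by linarith, by linarith⟩ (fun t ht => ⟨hy N t ht, mem_univ _⟩)
      (fun t ht => ⟨hy M t ⟨by linarith [ht.1], by linarith [ht.2]⟩, mem_univ _⟩) ?_
    rw [hy0, hy0]
  have hceil : ∀ t : ℝ, t ∈ Ioo (-((⌈|t|⌉₊ : ℕ) : ℝ) - 1) ((⌈|t|⌉₊ : ℕ) + 1) := by
    intro t
    have h := Nat.le_ceil |t|
    have h1 := abs_le.1 h
    exact ⟨by linarith [h1.1], by linarith [h1.2]⟩
  refine ⟨fun t => y ⌈|t|⌉₊ t, by simp [hy0], fun t => ?_⟩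
  set N := ⌈|t|⌉₊ + 1
  have ht : t ∈ Ioo (-(N:ℝ) - 1) (N + 1) := by
    have := hceil t
    simp only [N, Nat.cast_add, Nat.cast_one]
    exact ⟨by linarith [this.1], by linarith [this.2]⟩
  have e : ∀ s, y ⌈|s|⌉₊ s = y (max ⌈|s|⌉₊ N) s := fun s =>
    hag _ _ (le_max_left _ _) s (hceil s)
  have e2 : ∀ s ∈ Ioo (-(N:ℝ) - 1) (N + 1), y ⌈|s|⌉₊ s = y N s := fun s hs => by
    rw [e s]; exact (hag _ _ (le_max_right _ _) s hs).symm
  have h := hy N t ht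
  show HasDerivAt (fun t => y ⌈|t|⌉₊ t) (G t (y ⌈|t|⌉₊ t)) t
  rw [e2 t ht]
  refine h.congr_of_eventuallyEq ?_
  filter_upwards [isOpen_Ioo.mem_nhds ht] with s hs using e2 s hs

/-- global solution -/
def GS (G : ℝ → ℝ → ℝ) (y : ℝ → ℝ) : Prop := ∀ t, HasDerivAt y (G t (y t)) t

lemma gs_uniq (hG : GH T Λ M0 Cg K G q) {y z : ℝ → ℝ} (hy : GS G y) (hz : GS G z) {t₀ : ℝ}
    (h : y t₀ = z t₀) : y = z :=
  ODE_solution_unique_univ (v := G) (s := fun _ => univ) (fun t => hG.lipOn t _)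
    (fun t => ⟨hy t, mem_univ _⟩) (fun t => ⟨hz t, mem_univ _⟩) h

lemma GS.cont {y : ℝ → ℝ} (hy : GS G y) : Continuous y :=
  continuous_iff_continuousAt.2 fun t => (hy t).continuousAt

lemma gs_lt (hG : GH T Λ M0 Cg K G q) {y z : ℝ → ℝ} (hy : GS G y) (hz : GS G z)
    (h : y 0 < z 0) (t : ℝ) : y t < z t := by
  by_contra hc
  push Not at hc
  have hcont : Continuous fun t => z t - y t := hz.cont.sub hy.cont
  have := isPreconnected_univ.intermediate_value (mem_univ t) (mem_univ 0) hcont.continuousOn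
  obtain ⟨s, -, hs⟩ := this ⟨sub_nonpos.2 hc, (sub_pos.2 h).le⟩
  have e := gs_uniq hG hy hz (t₀ := s) (by simp only at hs; linarith)
  rw [e] at h
  exact lt_irrefl _ h

lemma gs_le (hG : GH T Λ M0 Cg K G q) {y z : ℝ → ℝ} (hy : GS G y) (hz : GS G z)
    (h : y 0 ≤ z 0) (t : ℝ) : y t ≤ z t := by
  rcases h.eq_or_lt with h | h
  · rw [gs_uniq hG hy hz h]
  · exact (gs_lt hG hy hz h t).le

lemma gs_slope (hG : GH T Λ M0 Cg K G q) {y z : ℝ → ℝ} (hy : GS G y) (hz : GS G z)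
    (h : y 0 ≤ z 0) {t : ℝ} (ht : 0 ≤ t) :
    Real.exp (-(Λ * t)) * (z 0 - y 0) ≤ z t - y t ∧ z t - y t ≤ Real.exp (Λ * t) * (z 0 - y 0) := by
  have hle := gs_le hG hy hz h
  have hd : ∀ t, HasDerivAt (fun t => z t - y t) (G t (z t) - G t (y t)) t := fun t =>
    (hz t).sub (hy t)
  have hb : ∀ t, |G t (z t) - G t (y t)| ≤ Λ * (z t - y t) := fun t => by
    have := hG.lip t (z t) (y t)
    rwa [abs_of_nonneg (by linarith [hle t] : 0 ≤ z t - y t)] at this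
  have hl : ∀ c t : ℝ, HasDerivAt (fun t => c * t) c t := fun c t => by
    simpa using (hasDerivAt_id t).const_mul c
  constructor
  · have hm : Monotone fun t => Real.exp (Λ * t) * (z t - y t) := by
      refine monotone_of_hasDerivAt_nonneg (fun t => ((hl Λ t).exp).mul (hd t)) fun t => ?_
      have := (abs_le.1 (hb t)).1
      have he := Real.exp_pos (Λ * t)
      simp only [Pi.zero_apply]
      nlinarith
    have := hm ht
    simp only [mul_zero, Real.exp_zero, one_mul] at this
    rw [Real.exp_neg, inv_mul_le_iff₀ (Real.exp_pos _)]
    exact this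
  · have hm : Antitone fun t => Real.exp (-Λ * t) * (z t - y t) := by
      refine antitone_of_hasDerivAt_nonpos (fun t => ((hl (-Λ) t).exp).mul (hd t)) fun t => ?_
      have := (abs_le.1 (hb t)).2
      have he := Real.exp_pos (-Λ * t)
      simp only [Pi.zero_apply]
      nlinarith
    have := hm ht
    simp only [mul_zero, Real.exp_zero, one_mul, neg_mul] at this
    rw [Real.exp_neg, inv_mul_le_iff₀ (Real.exp_pos _)] at this
    exact this

lemma gs_sd (hG : GH T Λ M0 Cg K G q) {y z w : ℝ → ℝ} (hy : GS G y) (hz : GS G z) (hw : GS G w)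
    (h0 : w 0 = (y 0 + z 0) / 2) (hyz : y 0 ≤ z 0)
    (hyK : ∀ t, |y t| ≤ K) (hzK : ∀ t, |z t| ≤ K) {S t : ℝ} (ht : t ∈ Icc 0 S) :
    |y t + z t - 2 * w t| ≤ (Cg * Real.exp (Λ * S) ^ 2 / Λ * Real.exp (Λ * S)) *
      (z 0 - y 0) ^ 2 := by
  have hd : ∀ t, HasDerivAt (fun t => y t + z t - 2 * w t) (G t (y t) + G t (z t)
      - 2 * G t (w t)) t := fun t => ((hy t).add (hz t)).sub ((hw t).const_mul 2)
  have hΛ := hG.hΛ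
  have hCg := hG.hCg
  have := norm_le_gronwallBound_of_norm_deriv_right_le (a := 0) (b := S) (δ := 0) (K := Λ)
    (ε := Cg * (Real.exp (Λ * S) * (z 0 - y 0)) ^ 2)
    (f := fun t => y t + z t - 2 * w t)
    (continuous_iff_continuousAt.2 fun t => (hd t).continuousAt).continuousOn
    (fun t _ => (hd t).hasDerivWithinAt) (by rw [h0]; simp; ring_nf) (fun s hs => by
      have h1 := g_mid hG s (y s) (z s) (hyK s) (hzK s)
      have h2 := hG.lip s ((y s + z s) / 2) (w s)
      have h3 := gs_slope hG hy hz hyz hs.1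
      have h4 : (y s - z s) ^ 2 ≤ (Real.exp (Λ * S) * (z 0 - y 0)) ^ 2 := by
        have : z s - y s ≤ Real.exp (Λ * S) * (z 0 - y 0) := by
          refine h3.2.trans (mul_le_mul_of_nonneg_right ?_ (by linarith))
          exact Real.exp_le_exp.2 (mul_le_mul_of_nonneg_left hs.2.le hΛ.le)
        have h5 := gs_le hG hy hz hyz s
        nlinarith
      have h5 := mul_le_mul_of_nonneg_left h4 hCg
      have e : (y s + z s) / 2 - w s = (y s + z s - 2 * w s) / 2 := by ring
      rw [e, abs_div, abs_two] at h2
      rw [Real.norm_eq_abs, Real.norm_eq_abs]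
      have a1 := abs_le.1 h1
      have a2 := abs_le.1 h2
      rw [abs_le]
      constructor <;> nlinarith [a1.1, a1.2, a2.1, a2.2]) t ht
  rw [gronwallBound_of_K_ne_0 hΛ.ne', Real.norm_eq_abs] at this
  refine this.trans ?_
  simp only [zero_mul, zero_add, sub_zero]
  have h6 : Real.exp (Λ * t) - 1 ≤ Real.exp (Λ * S) := by
    have := Real.exp_le_exp.2 (mul_le_mul_of_nonneg_left ht.2 hΛ.le)
    linarith
  calc _ ≤ Cg * (Real.exp (Λ * S) * (z 0 - y 0)) ^ 2 / Λ * Real.exp (Λ * S) := by gcongr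
    _ = _ := by ring
end

end

section

/-- interpolated flow: data for the subsolution -/
structure JH (T A m M C2 η0 : ℝ) (G : ℝ → ℝ → ℝ) (q : ℝ → ℝ) (J : ℝ → ℝ → ℝ) : Prop where
  hA : 0 < A
  hm : 0 < m
  hmM : m ≤ M
  hC2 : 0 ≤ C2
  hη : 0 < η0
  small : 12 * C2 * A ≤ m
  jc : ContinuousOn (fun p : ℝ × ℝ => J p.1 p.2) (Icc 0 T ×ˢ univ)
  j0T : ∀ a, J 0 a = J T a
  odd : ∀ t a, J t (-a) = -J t a
  slo : ∀ t ∈ Icc 0 T, ∀ a b, a ≤ b → m * (b - a) ≤ J t b - J t a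
  shi : ∀ t ∈ Icc 0 T, ∀ a b, a ≤ b → J t b - J t a ≤ M * (b - a)
  sd : ∀ t ∈ Icc 0 T, ∀ b c, |b| ≤ A → |c| ≤ A →
    |J t b + J t c - 2 * J t ((b + c) / 2)| ≤ C2 * (b - c) ^ 2
  le : ∀ t ∈ Icc 0 T, ∀ a ∈ Icc 0 A, J t a ≤ q t
  dt : ∀ t ∈ Icc 0 T, ∀ a ∈ Icc 0 A, ∃ d, HasDerivAt (fun τ => J τ a) d t ∧
    d ≤ G t (J t a) ∧ (A / 8 ≤ a → d ≤ G t (J t a) - η0)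

section
variable {T Λ M0 Cg K : ℝ} {G : ℝ → ℝ → ℝ} {q : ℝ → ℝ}

lemma g_conv (hG : GH T Λ M0 Cg K G q) (t : ℝ) {P Q l : ℝ} (hP : |P| ≤ K) (hQ : |Q| ≤ K)
    (hl : l ∈ Icc (0:ℝ) 1) :
    (1 - l) * G t P + l * G t Q ≤ G t ((1 - l) * P + l * Q) + Cg * (P - Q) ^ 2 := by
  obtain ⟨k, hk⟩ := hG.taylor
  set μ := (1 - l) * P + l * Q with hμ
  have h1 := hl.1
  have h2 := hl.2
  have hm : |μ| ≤ K := by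
    rw [abs_le] at *
    constructor <;> nlinarith [hP.1, hP.2, hQ.1, hQ.2]
  have a1 := (abs_le.1 (hk t μ P hm hP)).2
  have a2 := (abs_le.1 (hk t μ Q hm hQ)).2
  have e1 : P - μ = l * (P - Q) := by rw [hμ]; ring
  have e2 : Q - μ = -((1 - l) * (P - Q)) := by rw [hμ]; ring
  rw [e1] at a1
  rw [e2] at a2
  have b1 := mul_le_mul_of_nonneg_left a1 (by linarith : 0 ≤ 1 - l)
  have b2 := mul_le_mul_of_nonneg_left a2 h1
  have hc : 0 ≤ Cg * (P - Q) ^ 2 := mul_nonneg hG.hCg (sq_nonneg _)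
  have b3 : (1 - l) * (Cg * (l * (P - Q)) ^ 2) + l * (Cg * (-((1 - l) * (P - Q))) ^ 2)
      = (l * (1 - l)) * (Cg * (P - Q) ^ 2) := by ring
  have b4 : l * (1 - l) ≤ 1 := by nlinarith
  have b5 := mul_le_mul_of_nonneg_right b4 hc
  nlinarith

theorem J_exists (hG : GH T Λ M0 Cg K G q)
    (hmono : ∀ y, GS G y → 0 < y 0 → y 0 < q 0 → ∀ t, 0 ≤ t → y t < y (t + T)) :
    ∃ A m M C2 η0 J, JH T A m M C2 η0 G q J := by
  have hT := hG.hT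
  have hΛ := hG.hΛ
  have hCg := hG.hCg
  have hM0 : 0 ≤ M0 := (abs_nonneg _).trans (hG.bd 0 0)
  choose y hy0 hy using fun a => glob_sol hG a
  replace hy : ∀ a, GS G (y a) := hy
  set M := Real.exp (Λ * (2 * T)) with hM
  set m := Real.exp (-(Λ * (2 * T))) with hm
  have hMp : 0 < M := Real.exp_pos _
  have hmp : 0 < m := Real.exp_pos _
  set C2 := Cg * M ^ 2 / Λ * M with hC2
  have hC2p : 0 ≤ C2 := by positivity
  have hyneg : ∀ a, y (-a) = fun t => -y a t := by
    intro a
    refine gs_uniq hG (hy (-a)) (z := fun t => -y a t) ?_ (t₀ := 0) (by rw [hy0, hy0])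
    intro t
    rw [hG.odd]
    exact (hy a t).neg
  have hy00 : ∀ t, y 0 t = 0 := by
    intro t
    have := congrFun (hyneg 0) t
    rw [neg_zero] at this
    linarith
  have hqGS : GS G q := hG.qode
  have hle : ∀ a b, a ≤ b → ∀ t, y a t ≤ y b t := fun a b h =>
    gs_le hG (hy a) (hy b) (by rwa [hy0, hy0])
  have hleq : ∀ a, a ≤ q 0 → ∀ t, y a t ≤ q t := fun a h =>
    gs_le hG (hy a) hqGS (by rwa [hy0])
  have hyK : ∀ a, |a| ≤ q 0 → ∀ t, |y a t| ≤ K := by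
    intro a ha t
    have h1 := hleq a (le_of_abs_le ha) t
    have h2 := hleq (-a) (neg_le_of_abs_le ha |> fun h => by linarith) t
    rw [hyneg] at h2
    simp only at h2
    have := hG.qK t
    rw [abs_le]; constructor <;> linarith
  have hslo : ∀ t ∈ Icc 0 (2 * T), ∀ a b, a ≤ b → m * (b - a) ≤ y b t - y a t := by
    intro t ht a b hab
    have := (gs_slope hG (hy a) (hy b) (by rwa [hy0, hy0]) ht.1).1
    rw [hy0, hy0] at this
    refine le_trans (mul_le_mul_of_nonneg_right ?_ (by linarith)) this
    exact Real.exp_le_exp.2 (by have := mul_le_mul_of_nonneg_left ht.2 hΛ.le; linarith)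
  have hshi : ∀ t ∈ Icc 0 (2 * T), ∀ a b, a ≤ b → y b t - y a t ≤ M * (b - a) := by
    intro t ht a b hab
    have := (gs_slope hG (hy a) (hy b) (by rwa [hy0, hy0]) ht.1).2
    rw [hy0, hy0] at this
    refine le_trans this (mul_le_mul_of_nonneg_right ?_ (by linarith))
    exact Real.exp_le_exp.2 (by have := mul_le_mul_of_nonneg_left ht.2 hΛ.le; linarith)
  have hsd : ∀ t ∈ Icc 0 (2 * T), ∀ b c, |b| ≤ q 0 → |c| ≤ q 0 →
      |y b t + y c t - 2 * y ((b + c) / 2) t| ≤ C2 * (b - c) ^ 2 := by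
    intro t ht b c hb hc
    rcases le_total b c with h | h
    · have := gs_sd hG (hy b) (hy c) (hy ((b + c) / 2)) (by simp only [hy0])
        (by rwa [hy0, hy0]) (hyK b hb) (hyK c hc) ht
      rw [hy0, hy0] at this
      refine this.trans (le_of_eq ?_)
      rw [hC2]; ring
    · have := gs_sd hG (hy c) (hy b) (hy ((b + c) / 2)) (by simp only [hy0]; ring)
        (by rwa [hy0, hy0]) (hyK c hc) (hyK b hb) ht
      rw [hy0, hy0, add_comm (y c t)] at this
      exact this
  have hlipt : ∀ a s t, |y a s - y a t| ≤ M0 * |s - t| := by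
    intro a s t
    have := convex_univ.norm_image_sub_le_of_norm_hasDerivWithin_le
      (f := y a) (fun τ _ => (hy a τ).hasDerivWithinAt) (fun τ _ => hG.bd τ _)
      (mem_univ t) (mem_univ s)
    simpa [Real.norm_eq_abs] using this
  have hlipa : ∀ t ∈ Icc 0 (2 * T), ∀ a b, |y a t - y b t| ≤ M * |a - b| := by
    intro t ht a b
    rcases le_total a b with h | h
    · rw [abs_sub_comm, abs_sub_comm a, abs_of_nonneg (by linarith [hle a b h t]),
        abs_of_nonneg (by linarith)]
      exact hshi t ht a b h
    · rw [abs_of_nonneg (by linarith [hle b a h t]), abs_of_nonneg (by linarith)]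
      exact hshi t ht b a h
  have hyc : ContinuousOn (fun p : ℝ × ℝ => y p.2 p.1) (Icc 0 (2 * T) ×ˢ univ) := by
    intro p hp
    have h1 : Tendsto (fun r : ℝ × ℝ => M * |r.2 - p.2| + M0 * |r.1 - p.1|)
        (𝓝[Icc 0 (2 * T) ×ˢ univ] p) (𝓝 (M * |p.2 - p.2| + M0 * |p.1 - p.1|)) := by
      refine Tendsto.mono_left (Continuous.tendsto ?_ p) nhdsWithin_le_nhds
      fun_prop
    rw [sub_self, sub_self, abs_zero, mul_zero, mul_zero, add_zero] at h1
    rw [ContinuousWithinAt, tendsto_iff_dist_tendsto_zero]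
    refine squeeze_zero' (Eventually.of_forall fun _ => dist_nonneg) ?_ h1
    filter_upwards [self_mem_nhdsWithin] with r hr
    rw [Real.dist_eq]
    calc |y r.2 r.1 - y p.2 p.1| = |(y r.2 r.1 - y p.2 r.1) + (y p.2 r.1 - y p.2 p.1)| := by
          ring_nf
      _ ≤ _ := (abs_add_le _ _).trans (add_le_add (hlipa _ hr.1 _ _) (hlipt _ _ _))
  have hyc1 : ContinuousOn (fun p : ℝ × ℝ => y p.2 p.1) (Icc 0 T ×ˢ univ) :=
    hyc.mono (prod_mono (Icc_subset_Icc_right (by linarith)) le_rfl)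
  have hyc2 : ContinuousOn (fun p : ℝ × ℝ => y p.2 (p.1 + T)) (Icc 0 T ×ˢ univ) :=
    hyc.comp (f := fun p : ℝ × ℝ => (p.1 + T, p.2)) (by fun_prop) (fun p hp =>
      ⟨⟨by linarith [hp.1.1], by linarith [hp.1.2]⟩, mem_univ _⟩)
  have hyT : ∀ a t, HasDerivAt (fun τ => y a (τ + T)) (G t (y a (t + T))) t := by
    intro a t
    have := (hy a (t + T)).comp_add_const t T
    rwa [hG.per] at this
  obtain ⟨A, hA, hAq, hA1, hA2⟩ : ∃ A > 0, A < q 0 ∧ 12 * C2 * A ≤ m ∧ 2 * T * Cg * M * A ≤ 1 := by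
    have hq0 := hG.qpos 0
    have d1 : 0 < 12 * C2 + 1 := by positivity
    have d2 : 0 < 2 * T * Cg * M + 1 := by positivity
    refine ⟨min (q 0 / 2) (min (m / (12 * C2 + 1)) (1 / (2 * T * Cg * M + 1))), ?_, ?_, ?_, ?_⟩
    · refine lt_min (by positivity) (lt_min (by positivity) (by positivity))
    · exact (min_le_left _ _).trans_lt (by linarith)
    · have : min (q 0 / 2) (min (m / (12 * C2 + 1)) (1 / (2 * T * Cg * M + 1)))
        ≤ m / (12 * C2 + 1) := (min_le_right _ _).trans (min_le_left _ _)
      calc _ ≤ (12 * C2 + 1) * (m / (12 * C2 + 1)) :=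
            (mul_le_mul_of_nonneg_left this (by positivity)).trans
              (mul_le_mul_of_nonneg_right (by linarith) (by positivity))
        _ = m := mul_div_cancel₀ _ d1.ne'
    · have : min (q 0 / 2) (min (m / (12 * C2 + 1)) (1 / (2 * T * Cg * M + 1)))
        ≤ 1 / (2 * T * Cg * M + 1) := (min_le_right _ _).trans (min_le_right _ _)
      calc _ ≤ (2 * T * Cg * M + 1) * (1 / (2 * T * Cg * M + 1)) :=
            (mul_le_mul_of_nonneg_left this (by positivity)).trans
              (mul_le_mul_of_nonneg_right (by linarith) (by positivity))
        _ = 1 := mul_div_cancel₀ _ d2.ne'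
  have hinc : ∀ a, 0 < a → a ≤ A → ∀ t, 0 ≤ t → y a t < y a (t + T) := fun a h1 h2 =>
    hmono (y a) (hy a) (by rwa [hy0]) (by rw [hy0]; linarith)
  obtain ⟨η, hη, hηle⟩ : ∃ η > 0, ∀ t ∈ Icc 0 T, ∀ a ∈ Icc (A / 8) A,
      η ≤ y a (t + T) - y a t := by
    obtain ⟨p, hp, hmin⟩ := (isCompact_Icc.prod isCompact_Icc).exists_isMinOn
      (⟨(0, A), left_mem_Icc.2 hT.le, ⟨by linarith, le_rfl⟩⟩ :
        (Icc 0 T ×ˢ Icc (A / 8) A).Nonempty)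
      ((hyc2.sub hyc1).mono (prod_mono le_rfl (subset_univ _)))
    refine ⟨y p.2 (p.1 + T) - y p.2 p.1, ?_, fun t ht a ha => hmin (⟨ht, ha⟩ : (t, a) ∈ Icc 0 T ×ˢ Icc (A / 8) A)⟩
    linarith [hinc p.2 (by linarith [hp.2.1]) hp.2.2 p.1 hp.1.1]
  have hlam : ∀ t ∈ Icc 0 T, t / T ∈ Icc (0:ℝ) 1 := fun t ht =>
    ⟨div_nonneg ht.1 hT.le, (div_le_one hT).2 ht.2⟩
  have hI1 : ∀ t ∈ Icc 0 T, t ∈ Icc 0 (2 * T) := fun t ht => ⟨ht.1, by linarith [ht.2]⟩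
  have hI2 : ∀ t ∈ Icc 0 T, t + T ∈ Icc 0 (2 * T) := fun t ht =>
    ⟨by linarith [ht.1], by linarith [ht.2]⟩
  refine ⟨A, m, M, C2, η / (2 * T), fun t a => (1 - t / T) * y a (t + T) + t / T * y a t,
    hA, hmp, ?_, hC2p, by positivity, hA1, ?_, ?_, ?_, ?_, ?_, ?_, ?_, ?_⟩
  · exact Real.exp_le_exp.2 (by have := mul_pos hΛ hT; linarith)
  · exact ((by fun_prop : Continuous fun p : ℝ × ℝ => 1 - p.1 / T).continuousOn.mul hyc2).add
      ((by fun_prop : Continuous fun p : ℝ × ℝ => p.1 / T).continuousOn.mul hyc1)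
  · intro a; simp [div_self hT.ne']
  · intro t a; simp only [hyneg]; ring
  · intro t ht a b hab
    have h1 := mul_le_mul_of_nonneg_left (hslo t (hI1 t ht) a b hab) (hlam t ht).1
    have h2 := mul_le_mul_of_nonneg_left (hslo _ (hI2 t ht) a b hab)
      (sub_nonneg.2 (hlam t ht).2)
    nlinarith
  · intro t ht a b hab
    have h1 := mul_le_mul_of_nonneg_left (hshi t (hI1 t ht) a b hab) (hlam t ht).1
    have h2 := mul_le_mul_of_nonneg_left (hshi _ (hI2 t ht) a b hab)
      (sub_nonneg.2 (hlam t ht).2)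
    nlinarith
  · intro t ht b c hb hc
    have h1 := abs_le.1 (hsd t (hI1 t ht) b c (hb.trans hAq.le) (hc.trans hAq.le))
    have h2 := abs_le.1 (hsd _ (hI2 t ht) b c (hb.trans hAq.le) (hc.trans hAq.le))
    have l1 := (hlam t ht).1
    have l2 := sub_nonneg.2 (hlam t ht).2
    have a1 := mul_le_mul_of_nonneg_left h1.1 l1
    have a2 := mul_le_mul_of_nonneg_left h1.2 l1
    have a3 := mul_le_mul_of_nonneg_left h2.1 l2
    have a4 := mul_le_mul_of_nonneg_left h2.2 l2
    rw [abs_le]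
    constructor <;> nlinarith
  · intro t ht a ha
    have h1 := mul_le_mul_of_nonneg_left (hleq a (ha.2.trans hAq.le) t) (hlam t ht).1
    have h2 := mul_le_mul_of_nonneg_left (hleq a (ha.2.trans hAq.le) (t + T))
      (sub_nonneg.2 (hlam t ht).2)
    rw [hG.qper] at h2
    nlinarith
  · intro t ht a ha
    have hlin : HasDerivAt (fun τ : ℝ => τ / T) (1 / T) t := (hasDerivAt_id t).div_const T
    have hd := ((hlin.const_sub 1).mul (hyT a t)).add (hlin.mul (hy a t))
    refine ⟨_, hd, ?_⟩
    have haq : |a| ≤ q 0 := by rw [abs_of_nonneg ha.1]; linarith [ha.2]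
    have hc := g_conv hG t (hyK a haq (t + T)) (hyK a haq t) (hlam t ht)
    have hPQ : y a t ≤ y a (t + T) := by
      rcases ha.1.eq_or_lt with h | h
      · rw [← h, hy00, hy00]
      · exact (hinc a h ha.2 t ht.1).le
    have hQ0 : 0 ≤ y a t := by
      have := hle 0 a ha.1 t; rwa [hy00] at this
    have hPM : y a (t + T) ≤ M * A := by
      have := hshi _ (hI2 t ht) 0 a ha.1
      rw [hy00, sub_zero, sub_zero] at this
      exact this.trans (mul_le_mul_of_nonneg_left ha.2 hMp.le)
    set P := y a (t + T)
    set Q := y a t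
    have hquad : Cg * (P - Q) ^ 2 ≤ (P - Q) / (2 * T) := by
      rw [le_div_iff₀ (by positivity)]
      have h1 : P - Q ≤ M * A := by linarith
      have h2 : 2 * T * Cg * (P - Q) ≤ 1 := by
        have := mul_le_mul_of_nonneg_left h1 (by positivity : 0 ≤ 2 * T * Cg)
        linarith
      have := mul_le_mul_of_nonneg_right h2 (by linarith : 0 ≤ P - Q)
      linarith
    have e : -(1 / T) * P + (1 - t / T) * G t P + (1 / T * Q + t / T * G t Q)
        = ((1 - t / T) * G t P + t / T * G t Q) - 2 * ((P - Q) / (2 * T)) := by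
      field_simp; ring
    have hPQ2 : 0 ≤ (P - Q) / (2 * T) := div_nonneg (by linarith) (by positivity)
    rw [e]
    refine ⟨by linarith, fun h8 => ?_⟩
    have := hηle t ht a ⟨h8, ha.2⟩
    have : η / (2 * T) ≤ (P - Q) / (2 * T) := div_le_div_of_nonneg_right this (by positivity)
    linarith
end

end

section

def a0 (A ω x : ℝ) : ℝ := A * Real.cos (ω * x) ^ 3

lemma a0_eq (A ω x : ℝ) :
    a0 A ω x = A / 4 * (3 * Real.cos (ω * x) + Real.cos (3 * ω * x)) := by
  rw [a0, show 3 * ω * x = 3 * (ω * x) by ring, Real.cos_three_mul]; ring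

lemma a0_abs {A : ℝ} (hA : 0 ≤ A) (ω x : ℝ) : |a0 A ω x| ≤ A := by
  rw [a0, abs_mul, abs_of_nonneg hA, abs_pow]
  exact mul_le_of_le_one_right hA (pow_le_one₀ (abs_nonneg _) (Real.abs_cos_le_one _))

lemma a0_hol {A ω : ℝ} (hA : 0 ≤ A) (hω : 0 ≤ ω) : ∃ H, 0 ≤ H ∧ ∀ x y,
    |a0 A ω x - a0 A ω y| ≤ H * |x - y| ^ (5 / 8 : ℝ) := by
  refine ⟨A / 4 * (6 * ω ^ (5 / 8 : ℝ) + 2 * (3 * ω) ^ (5 / 8 : ℝ)), by positivity, ?_⟩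
  intro x y
  have h1 := cos_sub_le (σ := 5 / 8) (by norm_num) (by norm_num) (ω * x) (ω * y)
  have h2 := cos_sub_le (σ := 5 / 8) (by norm_num) (by norm_num) (3 * ω * x) (3 * ω * y)
  rw [← mul_sub, abs_mul, Real.mul_rpow (abs_nonneg _) (abs_nonneg _), abs_of_nonneg hω] at h1
  rw [← mul_sub (3 * ω) x, abs_mul (3 * ω), Real.mul_rpow (abs_nonneg _) (abs_nonneg _),
    abs_of_nonneg (by positivity : 0 ≤ 3 * ω)] at h2
  rw [a0_eq, a0_eq, ← mul_sub, abs_mul, abs_of_nonneg (by positivity : 0 ≤ A / 4), mul_assoc (A / 4)]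
  refine mul_le_mul_of_nonneg_left ?_ (by positivity)
  rw [abs_le] at *
  constructor <;> linarith [h1.1, h1.2, h2.1, h2.2]

lemma cos_sd (ω x h : ℝ) : Real.cos (ω * (x + h)) + Real.cos (ω * (x - h)) - 2 * Real.cos (ω * x)
    = Real.cos (ω * x) * (2 * Real.cos (ω * h) - 2) := by
  rw [mul_add, mul_sub, Real.cos_add, Real.cos_sub]; ring

lemma cos_sd_bd {ω x h : ℝ} (hω : 0 ≤ ω) (hh : 0 ≤ h) :
    |Real.cos (ω * (x + h)) + Real.cos (ω * (x - h)) - 2 * Real.cos (ω * x)|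
      ≤ 4 * ω ^ (5 / 4 : ℝ) * h ^ (5 / 4 : ℝ) := by
  have h1 := cos_sd_le (σ := 5 / 4) (by norm_num) (by norm_num) (ω * h)
  rw [abs_of_nonneg (by positivity : 0 ≤ ω * h), Real.mul_rpow hω hh] at h1
  rw [cos_sd, abs_mul]
  have := mul_le_of_le_one_left (abs_nonneg (2 * Real.cos (ω * h) - 2))
    (Real.abs_cos_le_one (ω * x))
  linarith

lemma a0_sd {A ω : ℝ} (hA : 0 ≤ A) (hω : 0 ≤ ω) : ∃ D, 0 ≤ D ∧ ∀ x h, 0 ≤ h →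
    |a0 A ω (x + h) + a0 A ω (x - h) - 2 * a0 A ω x| ≤ D * h ^ (5 / 4 : ℝ) := by
  refine ⟨A / 4 * (12 * ω ^ (5 / 4 : ℝ) + 4 * (3 * ω) ^ (5 / 4 : ℝ)), by positivity, ?_⟩
  intro x h hh
  have h1 := cos_sd_bd (x := x) hω hh
  have h2 := cos_sd_bd (x := x) (by positivity : 0 ≤ 3 * ω) hh
  rw [a0_eq, a0_eq, a0_eq, show ∀ k a b c : ℝ, k * a + k * b - 2 * (k * c) = k * (a + b - 2 * c)
    by intros; ring, abs_mul, abs_of_nonneg (by positivity : 0 ≤ A / 4), mul_assoc (A / 4)]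
  refine mul_le_mul_of_nonneg_left ?_ (by positivity)
  rw [abs_le] at *
  constructor <;> linarith [h1.1, h1.2, h2.1, h2.2]

lemma a0_d1 (A ω x : ℝ) : HasDerivAt (a0 A ω)
    (-(3 * A * ω * Real.cos (ω * x) ^ 2 * Real.sin (ω * x))) x := by
  have h0 : HasDerivAt (fun y => ω * y) ω x := by simpa using (hasDerivAt_id x).const_mul ω
  have := ((h0.cos.pow 3).const_mul A)
  refine this.congr_deriv ?_
  norm_num
  ring

lemma a0_d2 (A ω x : ℝ) : HasDerivAt
    (fun x => -(3 * A * ω * Real.cos (ω * x) ^ 2 * Real.sin (ω * x)))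
    (3 * A * ω ^ 2 * (Real.cos (ω * x) * (2 - 3 * Real.cos (ω * x) ^ 2))) x := by
  have h0 : HasDerivAt (fun y => ω * y) ω x := by simpa using (hasDerivAt_id x).const_mul ω
  have := (((h0.cos.pow 2).const_mul (3 * A * ω)).mul h0.sin).neg
  refine this.congr_deriv ?_
  have := Real.sin_sq (ω * x)
  norm_num
  linear_combination (6 * A * ω ^ 2 * Real.cos (ω * x)) * this

lemma trig_final {A ω m M C2 η0 c s : ℝ} (hA : 0 < A) (hm : 0 < m) (hmM : m ≤ M)
    (hC2 : 0 ≤ C2)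
    (small : 12 * C2 * A ≤ m) (hc0 : 0 ≤ c) (hcs : s ^ 2 = 1 - c ^ 2)
    (hω : ω ^ 2 * (3 * M * A + 36 * C2 * A ^ 2) ≤ η0) {wxx : ℝ}
    (hw : -(C2 * (2 * -(3 * A * ω * c ^ 2 * s)) ^ 2) +
      min (m * (3 * A * ω ^ 2 * (c * (2 - 3 * c ^ 2)))) (M * (3 * A * ω ^ 2 * (c * (2 - 3 * c ^ 2))))
      ≤ wxx) : 0 ≤ wxx ∨ (A / 8 ≤ A * c ^ 3 ∧ -η0 ≤ wxx) := by
  have hc1 : c ≤ 1 := by nlinarith [sq_nonneg s]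
  have e : C2 * (2 * -(3 * A * ω * c ^ 2 * s)) ^ 2 = 36 * C2 * A ^ 2 * ω ^ 2 * (c ^ 4 * s ^ 2) := by
    ring
  rw [e] at hw
  have hc41 : c ^ 4 ≤ c := by
    calc c ^ 4 = c * c ^ 3 := by ring
      _ ≤ c := mul_le_of_le_one_right hc0 (pow_le_one₀ hc0 hc1)
  have hs1 : s ^ 2 ≤ 1 := by nlinarith [sq_nonneg c]
  have hc4 : c ^ 4 * s ^ 2 ≤ c := (mul_le_of_le_one_right (by positivity) hs1).trans hc41
  rcases le_total (c ^ 2) (1 / 3) with h | h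
  · left
    have hpos : c ≤ c * (2 - 3 * c ^ 2) := by nlinarith
    have hd : 0 ≤ 3 * A * ω ^ 2 * (c * (2 - 3 * c ^ 2)) := mul_nonneg (by positivity) (by linarith)
    rw [min_eq_left (mul_le_mul_of_nonneg_right hmM hd)] at hw
    refine le_trans ?_ hw
    have h1 : 36 * C2 * A ^ 2 * ω ^ 2 * (c ^ 4 * s ^ 2) ≤ 36 * C2 * A ^ 2 * ω ^ 2 * c :=
      mul_le_mul_of_nonneg_left hc4 (by positivity)
    have h2 : 3 * A * ω ^ 2 * c ≤ 3 * A * ω ^ 2 * (c * (2 - 3 * c ^ 2)) :=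
      mul_le_mul_of_nonneg_left hpos (by positivity)
    have h3 := mul_le_mul_of_nonneg_left h2 hm.le
    have h4 := mul_le_mul_of_nonneg_right small (by positivity : 0 ≤ 3 * A * ω ^ 2 * c)
    linarith
  · right
    have hch : 1 / 2 ≤ c := by nlinarith
    have : (1 / 2) ^ 3 ≤ c ^ 3 := by gcongr
    refine ⟨by nlinarith, le_trans ?_ hw⟩
    have hlow : -1 ≤ c * (2 - 3 * c ^ 2) := by nlinarith [mul_nonneg hc0 (sub_nonneg.2 hc1)]
    have h2 : 3 * A * ω ^ 2 * (-1) ≤ 3 * A * ω ^ 2 * (c * (2 - 3 * c ^ 2)) :=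
      mul_le_mul_of_nonneg_left hlow (by positivity)
    have h3 := mul_le_mul_of_nonneg_left h2 hm.le
    have h4 := mul_le_mul_of_nonneg_left h2 (hm.le.trans hmM)
    have h5 := mul_le_mul_of_nonneg_right hmM (by positivity : 0 ≤ 3 * A * ω ^ 2)
    have h1 : 36 * C2 * A ^ 2 * ω ^ 2 * (c ^ 4 * s ^ 2) ≤ 36 * C2 * A ^ 2 * ω ^ 2 * 1 :=
      mul_le_mul_of_nonneg_left (hc4.trans hc1) (by positivity)
    have h6 : -(M * (3 * A * ω ^ 2)) ≤ min (m * (3 * A * ω ^ 2 * (c * (2 - 3 * c ^ 2))))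
        (M * (3 * A * ω ^ 2 * (c * (2 - 3 * c ^ 2)))) := le_min (by linarith) (by linarith)
    linarith

lemma left_min_deriv {g : ℝ → ℝ} {d t : ℝ} (h : HasDerivAt g d t)
    (hm : ∀ᶠ τ in 𝓝[<] t, g t ≤ g τ) : d ≤ 0 := by
  have := (hasDerivAt_iff_tendsto_slope_left_right.1 h).1
  refine le_of_tendsto this ?_
  filter_upwards [hm, self_mem_nhdsWithin] with τ h1 h2
  rw [slope_def_field]
  exact div_nonpos_of_nonneg_of_nonpos (by linarith) (by linarith [mem_Iio.1 h2])

lemma sym_quot {g : ℝ → ℝ} {d x : ℝ} (h : HasDerivAt g d x) :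
    Tendsto (fun h => (g (x + h) - g (x - h)) / h) (𝓝[>] 0) (𝓝 (2 * d)) := by
  have h1 : HasDerivAt (fun h => g (x + h) - g (x - h)) (2 * d) 0 := by
    have a : HasDerivAt (fun h => g (x + h)) d 0 := by
      apply HasDerivAt.comp_const_add; simpa using h
    have b : HasDerivAt (fun h => g (x - h)) (-d) 0 := by
      apply HasDerivAt.comp_const_sub; simpa using h
    refine (a.sub b).congr_deriv (by ring)
  have := (hasDerivAt_iff_tendsto_slope_left_right.1 h1).2
  refine this.congr fun h => ?_
  rw [slope_def_field]; simp

section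
variable {T Λ M0 Cg K A m M C2 η0 R : ℝ} {G : ℝ → ℝ → ℝ} {q : ℝ → ℝ} {J : ℝ → ℝ → ℝ}

def vv (T A R : ℝ) (J : ℝ → ℝ → ℝ) (x t : ℝ) : ℝ :=
  J (T * Int.fract (t / T)) (a0 A (Real.pi / (2 * R)) x)

lemma fr_mem (hT : 0 < T) (t : ℝ) : T * Int.fract (t / T) ∈ Icc 0 T :=
  ⟨mul_nonneg hT.le (Int.fract_nonneg _), mul_le_of_le_one_right hT.le (Int.fract_lt_one _).le⟩

lemma vv_eq (hT : 0 < T) (hJ : JH T A m M C2 η0 G q J) (x : ℝ) {s : ℝ} (hs : s ∈ Icc 0 T) (k : ℤ) :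
    vv T A R J x (s + k * T) = J s (a0 A (Real.pi / (2 * R)) x) := by
  rw [vv, add_div, mul_div_cancel_right₀ _ hT.ne', Int.fract_add_intCast]
  rcases hs.2.eq_or_lt with h | h
  · rw [h, div_self hT.ne', Int.fract_one, mul_zero, hJ.j0T]
  · rw [Int.fract_eq_self.2 ⟨div_nonneg hs.1 hT.le, (div_lt_one hT).2 h⟩, mul_div_cancel₀ _ hT.ne']

lemma th_mem (hR : 0 < R) {x : ℝ} (hx : x ∈ Icc (-R) R) :
    Real.pi / (2 * R) * x ∈ Icc (-(Real.pi / 2)) (Real.pi / 2) := by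
  have hω : 0 < Real.pi / (2 * R) := by positivity
  have e : Real.pi / (2 * R) * R = Real.pi / 2 := by field_simp
  have h1 := mul_le_mul_of_nonneg_left hx.1 hω.le
  have h2 := mul_le_mul_of_nonneg_left hx.2 hω.le
  exact ⟨by linarith, by linarith⟩

lemma J_zero (hJ : JH T A m M C2 η0 G q J) (t : ℝ) : J t 0 = 0 := by
  have := hJ.odd t 0
  rw [neg_zero] at this; linarith

lemma a0_mem (hA : 0 < A) (hR : 0 < R) {x : ℝ} (hx : x ∈ Icc (-R) R) :
    a0 A (Real.pi / (2 * R)) x ∈ Icc 0 A := by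
  refine ⟨?_, (le_abs_self _).trans (a0_abs hA.le _ _)⟩
  have := Real.cos_nonneg_of_mem_Icc (th_mem hR hx)
  rw [a0]; positivity

lemma vv_test (hG : GH T Λ M0 Cg K G q) (hJ : JH T A m M C2 η0 G q J) (hR : 0 < R)
    (hω : (Real.pi / (2 * R)) ^ 2 * (3 * M * A + 36 * C2 * A ^ 2) ≤ η0)
    (w : ℝ → ℝ → ℝ) (wx : ℝ → ℝ) (wxx wt x t : ℝ) (hx : x ∈ Ioo (-R) R)
    (hwx : ∀ y, HasDerivAt (fun y => w y t) (wx y) y) (hwxx : HasDerivAt wx wxx x)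
    (hwt : HasDerivAt (fun τ => w x τ) wt t)
    (hmin : ∀ y ∈ Icc (-R) R, ∀ τ, w x t - vv T A R J x t ≤ w y τ - vv T A R J y τ) :
    wt ≤ wxx + G t (vv T A R J x t) := by
  have hT := hG.hT
  set k : ℤ := ⌈t / T⌉ - 1 with hk
  obtain ⟨s, hst⟩ : ∃ s, t = s + k * T := ⟨t - k * T, by ring⟩
  have hs0 : 0 < s := by
    have := Int.ceil_lt_add_one (t / T)
    have h2 : (k:ℝ) < t / T := by rw [hk]; push_cast; linarith
    rw [lt_div_iff₀ hT] at h2; linarith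
  have hsT : s ≤ T := by
    have := Int.le_ceil (t / T)
    have h2 : t / T ≤ (k:ℝ) + 1 := by rw [hk]; push_cast; linarith
    rw [div_le_iff₀ hT] at h2; linarith
  have hs : s ∈ Icc 0 T := ⟨hs0.le, hsT⟩
  set ω := Real.pi / (2 * R) with hωd
  have hxI := Ioo_subset_Icc_self hx
  have hv : ∀ y, vv T A R J y t = J s (a0 A ω y) := fun y => by rw [hst]; exact vv_eq hT hJ y hs k
  have hGk : ∀ w, G t w = G s w := by
    intro w
    have hp : Function.Periodic (fun τ => G τ w) T := fun τ => hG.per τ w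
    rw [hst]; exact hp.int_mul k s
  have ha := a0_mem hJ.hA hR hxI
  obtain ⟨d, hd, hd1, hd2⟩ := hJ.dt s hs _ ha
  -- time
  have hwd : wt ≤ d := by
    have hd' : HasDerivAt (fun τ => J (τ - k * T) (a0 A ω x)) d t := by
      refine HasDerivAt.comp_sub_const (f := fun τ => J τ (a0 A ω x)) t (k * T) ?_
      have e : t - k * T = s := by linarith
      rw [e]; exact hd
    have := left_min_deriv (hwt.sub hd') ?_
    · linarith
    have : ∀ᶠ τ in 𝓝[<] t, t - s < τ := 
      eventually_nhdsWithin_of_eventually_nhds (lt_mem_nhds (by linarith))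
    filter_upwards [this, self_mem_nhdsWithin] with τ h1 h2
    have h2 := mem_Iio.1 h2
    have h3 := hmin x hxI τ
    have h4 : vv T A R J x τ = J (τ - k * T) (a0 A ω x) := by
      have := vv_eq (R := R) hT hJ x (s := τ - k * T) ⟨by linarith, by linarith⟩ k
      rwa [sub_add_cancel] at this
    rw [h4, hv] at h3
    have e : t - k * T = s := by linarith
    simp only [Pi.sub_apply, e]
    exact h3
  -- space
  set a1 := -(3 * A * ω * Real.cos (ω * x) ^ 2 * Real.sin (ω * x)) with ha1
  set a2 := 3 * A * ω ^ 2 * (Real.cos (ω * x) * (2 - 3 * Real.cos (ω * x) ^ 2)) with ha2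
  have hsp : -(C2 * (2 * a1) ^ 2) + min (m * a2) (M * a2) ≤ wxx := by
    have t1 := sdq_tendsto hwx hwxx
    have t2 := sdq_tendsto (fun y => a0_d1 A ω y) (a0_d2 A ω x)
    have t3 := sym_quot (a0_d1 A ω x)
    have t4 := (((t3.pow 2).const_mul C2).neg).add ((t2.const_mul m).min (t2.const_mul M))
    refine le_of_tendsto_of_tendsto t4 t1 ?_
    have e1 : ∀ᶠ h in 𝓝[>] (0:ℝ), h < min (R - x) (x + R) :=
      eventually_nhdsWithin_of_eventually_nhds
        (gt_mem_nhds (lt_min (by linarith [hx.2]) (by linarith [hx.1])))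
    filter_upwards [e1, self_mem_nhdsWithin] with h h1 h2
    have h2 : 0 < h := h2
    have h3 := h1.trans_le (min_le_left _ _)
    have h4 := h1.trans_le (min_le_right _ _)
    have m1 := hmin (x + h) ⟨by linarith [hx.1], by linarith⟩ t
    have m2 := hmin (x - h) ⟨by linarith, by linarith [hx.2]⟩ t
    rw [hv, hv] at m1 m2
    have b1 := (abs_le.1 (hJ.sd s hs (a0 A ω (x + h)) (a0 A ω (x - h)) (a0_abs hJ.hA.le _ _)
      (a0_abs hJ.hA.le _ _))).1
    set b := a0 A ω (x + h)
    set c := a0 A ω (x - h)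
    set a := a0 A ω x
    have b2 : min (m * (b + c - 2 * a)) (M * (b + c - 2 * a)) ≤ 2 * (J s ((b + c) / 2) - J s a) := by
      rcases le_total a ((b + c) / 2) with hl | hl
      · have := hJ.slo s hs _ _ hl
        exact (min_le_left _ _).trans (by linarith)
      · have := hJ.shi s hs _ _ hl
        exact (min_le_right _ _).trans (by linarith)
    have hh2 : 0 < h ^ 2 := by positivity
    rw [le_div_iff₀ hh2, add_mul, min_mul_of_nonneg _ _ hh2.le]
    have c1 : -(C2 * ((b - c) / h) ^ 2) * h ^ 2 = -(C2 * (b - c) ^ 2) := by field_simp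
    have c2 : ∀ z : ℝ, z * ((b + c - 2 * a) / h ^ 2) * h ^ 2 = z * (b + c - 2 * a) := by
      intro z; field_simp
    rw [c1, c2, c2]
    linarith
  rw [hv, hGk]
  have hc0 := Real.cos_nonneg_of_mem_Icc (th_mem hR hxI)
  rcases trig_final hJ.hA hJ.hm hJ.hmM hJ.hC2 hJ.small hc0 (Real.sin_sq _) hω hsp with h | ⟨h, h'⟩
  · linarith
  · have := hd2 h
    linarith

theorem vv_VH (hG : GH T Λ M0 Cg K G q) (hJ : JH T A m M C2 η0 G q J) (hR : 0 < R)
    (hω : (Real.pi / (2 * R)) ^ 2 * (3 * M * A + 36 * C2 * A ^ 2) ≤ η0) :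
    ∃ Hv Dv, VH R T G q (vv T A R J) Hv Dv := by
  have hT := hG.hT
  have hωp : 0 ≤ Real.pi / (2 * R) := by positivity
  have hMp := hJ.hm.le.trans hJ.hmM
  obtain ⟨H, hH, hhol⟩ := a0_hol (ω := Real.pi / (2 * R)) hJ.hA.le hωp
  obtain ⟨D, hD, hsd⟩ := a0_sd (ω := Real.pi / (2 * R)) hJ.hA.le hωp
  have hJlip : ∀ s ∈ Icc 0 T, ∀ a b, |J s a - J s b| ≤ M * |a - b| := by
    intro s hs a b
    have key : ∀ a b, a ≤ b → |J s a - J s b| ≤ M * |a - b| := by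
      intro a b h
      have h1 := hJ.slo s hs a b h
      have h2 := hJ.shi s hs a b h
      have h3 := mul_nonneg hJ.hm.le (sub_nonneg.2 h)
      rw [abs_sub_comm, abs_sub_comm a, abs_of_nonneg (by linarith), abs_of_nonneg (by linarith)]
      exact h2
    rcases le_total a b with h | h
    · exact key a b h
    · rw [abs_sub_comm, abs_sub_comm a]; exact key b a h
  have hJm : ∀ s ∈ Icc 0 T, ∀ a b, a ≤ b → J s a ≤ J s b := by
    intro s hs a b h
    have := hJ.slo s hs a b h
    have h3 := mul_nonneg hJ.hm.le (sub_nonneg.2 h)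
    linarith
  have hhol' : ∀ t x y, |vv T A R J x t - vv T A R J y t| ≤ M * H * |x - y| ^ (5 / 8 : ℝ) := by
    intro t x y
    refine (hJlip _ (fr_mem hT t) _ _).trans ?_
    rw [mul_assoc]
    exact mul_le_mul_of_nonneg_left (hhol x y) hMp
  refine ⟨M * H, C2 * (H ^ 2 * 4) + M * D, ?_, ?_, ?_, ?_, ?_, ?_, ?_, hhol', ?_, ?_⟩
  · have hc : Continuous (a0 A (Real.pi / (2 * R))) := by unfold a0; fun_prop
    refine ContinuousOn.comp_fract (s := fun p : ℝ × ℝ => p.2 / T)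
      (f := fun p r => J (T * r) (a0 A (Real.pi / (2 * R)) p.1)) ?_ (by fun_prop) ?_
    · refine hJ.jc.comp (f := fun z : (ℝ × ℝ) × ℝ => (T * z.2, a0 A (Real.pi / (2 * R)) z.1.1))
        (by fun_prop) ?_
      intro z hz
      exact ⟨⟨mul_nonneg hT.le hz.2.1, mul_le_of_le_one_right hT.le hz.2.2⟩, mem_univ _⟩
    · intro p; simp only [mul_zero, mul_one, hJ.j0T]
  · intro x t
    rw [vv, vv, add_div, div_self hT.ne', Int.fract_add_one]
  · intro t
    constructor
    · intro x
      simp only [vv, a0, mul_neg, Real.cos_neg]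
    · intro x
      simp only [vv]
      rw [← hJ.odd]
      congr 1
      rw [a0, a0, show Real.pi / (2 * R) * (2 * R - x) = Real.pi - Real.pi / (2 * R) * x by
        field_simp, Real.cos_pi_sub]
      ring
  · intro x hx t
    have := hJm _ (fr_mem hT t) 0 _ (a0_mem hJ.hA hR hx).1
    rwa [J_zero hJ] at this
  · intro x hx t
    have := hJ.le _ (fr_mem hT t) _ (a0_mem hJ.hA hR hx)
    refine this.trans (le_of_eq ?_)
    have hp : Function.Periodic q T := hG.qper
    have e : T * Int.fract (t / T) = t - ⌊t / T⌋ * T := by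
      rw [Int.fract]; field_simp
    rw [e]; exact hp.sub_int_mul_eq _
  · intro t x hx y hy hxy
    refine hJm _ (fr_mem hT t) _ _ ?_
    have h1 := th_mem hR (x := x) ⟨by linarith [hx.1], hx.2⟩
    have h2 := th_mem hR (x := y) ⟨by linarith [hy.1], hy.2⟩
    have h3 := Real.cos_nonneg_of_mem_Icc h2
    have h4 := Real.cos_le_cos_of_nonneg_of_le_pi (mul_nonneg hωp hx.1)
      (by linarith [h2.2, Real.pi_pos]) (mul_le_mul_of_nonneg_left hxy hωp)
    rw [a0, a0]
    have := hJ.hA.le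
    gcongr
  · intro t
    have := hJ.slo _ (fr_mem hT t) 0 (a0 A (Real.pi / (2 * R)) 0) (by simp [a0, hJ.hA.le])
    rw [J_zero hJ] at this
    have h0 : a0 A (Real.pi / (2 * R)) 0 = A := by simp [a0]
    have hm := mul_pos hJ.hm hJ.hA
    rw [vv]
    rw [h0] at this ⊢
    linarith
  · intro t x h hh
    have hs := fr_mem hT t
    set s := T * Int.fract (t / T) with hsdef
    have b1 := hJ.sd s hs (a0 A (Real.pi / (2 * R)) (x + h)) (a0 A (Real.pi / (2 * R)) (x - h))
      (a0_abs hJ.hA.le _ _) (a0_abs hJ.hA.le _ _)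
    have h5 := hhol (x + h) (x - h)
    rw [show x + h - (x - h) = 2 * h by ring, abs_of_nonneg (by positivity : 0 ≤ 2 * h)] at h5
    have h6 := hsd x h hh
    show |J s _ + J s _ - 2 * J s _| ≤ _
    set b := a0 A (Real.pi / (2 * R)) (x + h)
    set c := a0 A (Real.pi / (2 * R)) (x - h)
    set a := a0 A (Real.pi / (2 * R)) x
    have h4 : (b - c) ^ 2 ≤ H ^ 2 * (4 * h ^ (5 / 4 : ℝ)) := by
      rw [← sq_abs]
      calc |b - c| ^ 2 ≤ (H * (2 * h) ^ (5 / 8 : ℝ)) ^ 2 := by gcongr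
        _ = H ^ 2 * ((2 * h) ^ (5 / 8 : ℝ)) ^ 2 := by ring
        _ ≤ _ := mul_le_mul_of_nonneg_left (two_rpow_54 hh) (sq_nonneg _)
    have h7 := hJlip s hs ((b + c) / 2) a
    have h8 : |(b + c) / 2 - a| ≤ D * h ^ (5 / 4 : ℝ) / 2 := by
      rw [show (b + c) / 2 - a = (b + c - 2 * a) / 2 by ring, abs_div, abs_two]
      linarith
    have h9 := mul_le_mul_of_nonneg_left h4 hJ.hC2
    have h10 := h7.trans (mul_le_mul_of_nonneg_left h8 hMp)
    rw [abs_le] at *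
    constructor <;> linarith [b1.1, b1.2, h10.1, h10.2]
  · exact vv_test hG hJ hR hω

/-- the abstract existence theorem -/
theorem abstract_exists (hG : GH T Λ M0 Cg K G q)
    (hmono : ∀ y, GS G y → 0 < y 0 → y 0 < q 0 → ∀ t, 0 ≤ t → y t < y (t + T)) :
    ∃ R₀ > (0:ℝ), ∀ R, R₀ ≤ R → ∃ u ux uxx : ℝ → ℝ → ℝ,
      Continuous (fun p : ℝ × ℝ => u p.1 p.2) ∧ (∀ x t, u x (t + T) = u x t) ∧
      (∀ x t, u (-x) t = u x t) ∧ (∀ t, u R t = 0 ∧ u (-R) t = 0) ∧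
      (∀ x ∈ Ioo (-R) R, ∀ t, 0 < u x t ∧ u x t < q t) ∧
      (∀ x ∈ Ioo 0 R, ∀ t, ux x t < 0) ∧
      (∀ x t, HasDerivAt (fun y => u y t) (ux x t) x) ∧
      (∀ x t, HasDerivAt (fun y => ux y t) (uxx x t) x) ∧
      (∀ x t, HasDerivAt (fun τ => u x τ) (uxx x t + G t (u x t)) t) := by
  obtain ⟨A, m, M, C2, η0, J, hJ⟩ := J_exists hG hmono
  have hM : 0 ≤ M := hJ.hm.le.trans hJ.hmM
  have hA := hJ.hA
  have hC2 := hJ.hC2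
  have hη := hJ.hη
  set B := 3 * M * A + 36 * C2 * A ^ 2 with hB
  have hB0 : 0 ≤ B := by positivity
  refine ⟨max 1 ((Real.pi / 2) ^ 2 * B / η0), by positivity, fun R hR => ?_⟩
  have hR1 : 1 ≤ R := (le_max_left _ _).trans hR
  have hR2 : (Real.pi / 2) ^ 2 * B / η0 ≤ R := (le_max_right _ _).trans hR
  have hRp : 0 < R := by linarith
  have hω : (Real.pi / (2 * R)) ^ 2 * B ≤ η0 := by
    rw [div_le_iff₀ hη] at hR2
    have : (Real.pi / (2 * R)) ^ 2 * B = (Real.pi / 2) ^ 2 * B / R ^ 2 := by field_simp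
    rw [this, div_le_iff₀ (by positivity)]
    nlinarith [mul_nonneg hη.le (by nlinarith : 0 ≤ R ^ 2 - R)]
  obtain ⟨Hv, Dv, hv⟩ := vv_VH hG hJ hRp hω
  obtain ⟨H, D, u, ux, uxx, hu, hs⟩ := iter_exists hRp hG hv le_rfl
  obtain ⟨st1, st2⟩ := strictness hRp hG hv le_rfl hu hs
  refine ⟨u, ux, uxx, hu.cont, hu.per, fun x t => (hu.sym t).even x, fun t => (hu.sym t).atR,
    st1, st2, hs.hx, hs.hxx, fun x t => ?_⟩
  exact (hs.ht x t).congr_deriv (by ring)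
end

end

lemma taylor1 {ψ ψ' : ℝ → ℝ} {L K' a b : ℝ} (hL : 0 ≤ L) (hd : ∀ r, HasDerivAt ψ (ψ' r) r)
    (hl : ∀ r ∈ Icc 0 K', ∀ s ∈ Icc 0 K', |ψ' r - ψ' s| ≤ L * |r - s|)
    (ha : a ∈ Icc 0 K') (hb : b ∈ Icc 0 K') :
    |ψ b - ψ a - ψ' a * (b - a)| ≤ L * (b - a) ^ 2 := by
  have hsub : uIcc a b ⊆ Icc 0 K' := uIcc_subset_Icc ha hb
  have := (convex_uIcc a b).norm_image_sub_le_of_norm_hasDerivWithin_le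
    (f := fun r => ψ r - ψ' a * r) (f' := fun r => ψ' r - ψ' a) (C := L * |b - a|)
    (fun r _ => by
      have h0 : HasDerivAt (fun r => ψ' a * r) (ψ' a) r := by
        simpa using (hasDerivAt_id r).const_mul (ψ' a)
      exact ((hd r).sub h0).hasDerivWithinAt)
    (fun r hr => (hl r (hsub hr) a ha).trans
      (mul_le_mul_of_nonneg_left (abs_sub_left_of_mem_uIcc hr) hL))
    left_mem_uIcc right_mem_uIcc
  simp only [Real.norm_eq_abs] at this
  rw [show ψ b - ψ a - ψ' a * (b - a) = ψ b - ψ' a * b - (ψ a - ψ' a * a) by ring]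
  refine this.trans (le_of_eq ?_)
  rw [mul_assoc, abs_mul_abs_self]; ring

def cl (K w : ℝ) : ℝ := min (max w 0) K

lemma cl_mem {K : ℝ} (hK : 0 ≤ K) (w : ℝ) : cl K w ∈ Icc 0 K :=
  ⟨le_min (le_max_right _ _) hK, min_le_right _ _⟩

lemma cl_pos {K w : ℝ} (h : 0 ≤ w) (hK : w ≤ K) : cl K w = w := by
  rw [cl, max_eq_left h, min_eq_left hK]

lemma cl_neg {K w : ℝ} (hK : 0 ≤ K) (h : w ≤ 0) : cl K w = 0 := by
  rw [cl, max_eq_right h, min_eq_left hK]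

lemma cl_lip (K a b : ℝ) : |cl K a - cl K b| ≤ |a - b| :=
  (abs_min_sub_min_le_max _ _ _ _).trans (by
    rw [sub_self, abs_zero, max_eq_left (abs_nonneg _)]
    refine (abs_max_sub_max_le_max _ _ _ _).trans ?_
    rw [sub_self, abs_zero, max_eq_left (abs_nonneg _)])

def GG (f : ℝ → ℝ → ℝ) (pm : ℝ → ℝ) (K t w : ℝ) : ℝ :=
  f t (pm t + cl K w) - f t (pm t + cl K (-w))

lemma GG_pos {f : ℝ → ℝ → ℝ} {pm : ℝ → ℝ} {K t w : ℝ} (h : 0 ≤ w) (hK : w ≤ K) :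
    GG f pm K t w = f t (pm t + w) - f t (pm t) := by
  rw [GG, cl_pos h hK, cl_neg (h.trans hK) (by linarith), add_zero]

lemma GG_odd (f : ℝ → ℝ → ℝ) (pm : ℝ → ℝ) (K t w : ℝ) : GG f pm K t (-w) = -GG f pm K t w := by
  rw [GG, GG, neg_neg]; ring

/-- Taylor estimate for the odd extension -/
lemma odd_taylor {γ ψ' : ℝ → ℝ} {L K a b : ℝ} (hL : 0 ≤ L) (hodd : ∀ w, γ (-w) = -γ w)
    (h : ∀ r ∈ Icc 0 K, ∀ s ∈ Icc 0 K, |γ s - γ r - ψ' r * (s - r)| ≤ L * (s - r) ^ 2)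
    (hl : ∀ r ∈ Icc 0 K, ∀ s ∈ Icc 0 K, |ψ' r - ψ' s| ≤ L * |r - s|)
    (ha : |a| ≤ K) (hb : |b| ≤ K) :
    |γ b - γ a - ψ' |a| * (b - a)| ≤ L * (b - a) ^ 2 := by
  have key : ∀ a b, 0 ≤ a → |a| ≤ K → |b| ≤ K →
      |γ b - γ a - ψ' |a| * (b - a)| ≤ L * (b - a) ^ 2 := by
    intro a b h0 ha hb
    have h00 : γ 0 = 0 := by
      have := hodd 0
      rw [neg_zero] at this; linarith
    rw [abs_of_nonneg h0] at *
    rcases le_total 0 b with hb0 | hb0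
    · rw [abs_of_nonneg hb0] at hb
      exact h a ⟨h0, ha⟩ b ⟨hb0, hb⟩
    · rw [abs_of_nonpos hb0] at hb
      have hz : (0:ℝ) ∈ Icc 0 K := ⟨le_rfl, h0.trans ha⟩
      have e1 := abs_le.1 (h 0 hz (-b) ⟨by linarith, hb⟩)
      have e2 := abs_le.1 (h a ⟨h0, ha⟩ 0 hz)
      have e3 := hl 0 hz a ⟨h0, ha⟩
      rw [hodd, h00] at e1
      rw [h00] at e2
      rw [zero_sub a, abs_neg, abs_of_nonneg h0] at e3
      have e4 : |(ψ' 0 - ψ' a) * b| ≤ L * a * (-b) := by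
        rw [abs_mul, abs_of_nonpos hb0]
        exact mul_le_mul_of_nonneg_right e3 (by linarith)
      have e4 := abs_le.1 e4
      have e5 : 0 ≤ L * (a * (-b)) := mul_nonneg hL (mul_nonneg h0 (by linarith))
      rw [abs_le]
      constructor <;> nlinarith [e1.1, e1.2, e2.1, e2.2, e4.1, e4.2]
  rcases le_total 0 a with h0 | h0
  · exact key a b h0 ha hb
  · have := key (-a) (-b) (by linarith) (by rwa [abs_neg]) (by rwa [abs_neg])
    rw [hodd, hodd, abs_neg, ← abs_neg] at this
    calc _ = |-(-γ b - -γ a - ψ' |a| * (-b - -a))| := by ring_nf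
      _ ≤ _ := this
      _ = _ := by ring

lemma GG_GH
    (T : ℝ) (hT : 0 < T) (f : ℝ → ℝ → ℝ)
    (hf_cont : Continuous fun q : ℝ × ℝ => f q.1 q.2)
    (hf_C1 : ∀ t, ContDiff ℝ 1 (f t))
    (hfT : ∀ t v : ℝ, 0 ≤ v → f (t + T) v = f t v)
    (hfLip : ∀ K : ℝ, ∃ L : ℝ, ∀ t : ℝ, ∀ v ∈ Set.Icc (0:ℝ) K, ∀ w ∈ Set.Icc (0:ℝ) K,
      |deriv (f t) v - deriv (f t) w| ≤ L * |v - w|)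
    (pm pp : ℝ → ℝ) (hpm : XPer T f pm) (hpp : XPer T f pp) (hlt : ∀ t, pm t < pp t) :
    ∃ K Λ M0 Cg, GH T Λ M0 Cg K (GG f pm K) (fun t => pp t - pm t) := by
  obtain ⟨pm0, pmT, pmo⟩ := hpm
  obtain ⟨pp0, ppT, ppo⟩ := hpp
  have cm : Continuous pm := continuous_iff_continuousAt.2 fun t => (pmo t (mem_univ t)).continuousAt
  have cp : Continuous pp := continuous_iff_continuousAt.2 fun t => (ppo t (mem_univ t)).continuousAt
  obtain ⟨t1, ht1⟩ := exists_max_periodic hT (cp.sub cm) (fun t => by simp only [Pi.sub_apply, pmT, ppT])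
  obtain ⟨t2, ht2⟩ := exists_max_periodic hT cm pmT
  simp only [Pi.sub_apply] at ht1
  set K := pp t1 - pm t1 with hK
  have hKp : 0 < K := sub_pos.2 (hlt t1)
  set B := pm t2 + K with hB
  have hBp : 0 < B := by linarith [pm0 t2]
  obtain ⟨L0, hL0⟩ := hfLip B
  set L := |L0| with hLd
  have hL : 0 ≤ L := abs_nonneg _
  have hLip : ∀ t : ℝ, ∀ v ∈ Icc (0:ℝ) B, ∀ w ∈ Icc (0:ℝ) B,
      |deriv (f t) v - deriv (f t) w| ≤ L * |v - w| := fun t v hv w hw =>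
    (hL0 t v hv w hw).trans (mul_le_mul_of_nonneg_right (le_abs_self _) (abs_nonneg _))
  have hfd : ∀ t v, HasDerivAt (f t) (deriv (f t) v) v := fun t v =>
    ((hf_C1 t).differentiable (by norm_num) v).hasDerivAt
  obtain ⟨F, hF⟩ : ∃ F, ∀ t, ∀ v ∈ Icc 0 B, |f t v| ≤ F := by
    obtain ⟨F, hF⟩ := (isCompact_Icc.prod isCompact_Icc).exists_bound_of_continuousOn
      (hf_cont.continuousOn (s := Icc 0 T ×ˢ Icc 0 B))
    refine ⟨F, fun t v hv => ?_⟩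
    have hp : Function.Periodic (fun t => f t v) T := fun t => hfT t v hv.1
    obtain ⟨s, hs, e⟩ := hp.exists_mem_Ico₀ hT t
    rw [show f t v = f s v from e]
    exact hF (s, v) ⟨Ico_subset_Icc_self hs, hv⟩
  have hF0 : 0 ≤ F := (abs_nonneg _).trans (hF 0 0 ⟨le_rfl, hBp.le⟩)
  obtain ⟨N, hN0, hN⟩ : ∃ N, 0 ≤ N ∧ ∀ t, ∀ v ∈ Icc 0 B, |deriv (f t) v| ≤ N := by
    refine ⟨2 * F / B + L * B, by positivity, fun t v hv => ?_⟩
    have hz : (0:ℝ) ∈ Icc 0 B := ⟨le_rfl, hBp.le⟩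
    have hBm : B ∈ Icc 0 B := ⟨hBp.le, le_rfl⟩
    obtain ⟨ξ, hξ, e⟩ := exists_hasDerivAt_eq_slope (f t) (deriv (f t)) hBp
      ((hf_C1 t).continuous.continuousOn) (fun x _ => hfd t x)
    have h1 : |deriv (f t) ξ| ≤ 2 * F / B := by
      rw [e, sub_zero, abs_div, abs_of_pos hBp]
      refine div_le_div_of_nonneg_right ((abs_sub _ _).trans ?_) hBp.le
      linarith [hF t B hBm, hF t 0 hz]
    have h2 := hLip t v hv ξ (Ioo_subset_Icc_self hξ)
    have h3 : |v - ξ| ≤ B := by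
      rw [abs_le]; constructor <;> linarith [hv.1, hv.2, hξ.1, hξ.2]
    have h4 := h2.trans (mul_le_mul_of_nonneg_left h3 hL)
    calc |deriv (f t) v| = |deriv (f t) ξ + (deriv (f t) v - deriv (f t) ξ)| := by ring_nf
      _ ≤ _ := (abs_add_le _ _).trans (add_le_add h1 h4)
  have hin : ∀ t, ∀ r ∈ Icc 0 K, pm t + r ∈ Icc 0 B := fun t r hr =>
    ⟨by linarith [pm0 t, hr.1], by linarith [ht2 t, hr.2]⟩
  have hflip : ∀ t, ∀ v ∈ Icc 0 B, ∀ w ∈ Icc 0 B, |f t v - f t w| ≤ N * |v - w| := by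
    intro t v hv w hw
    exact (convex_Icc 0 B).norm_image_sub_le_of_norm_hasDerivWithin_le
      (fun x _ => (hfd t x).hasDerivWithinAt) (fun x hx => hN t x hx) hw hv
  have hcl : ∀ t w, pm t + cl K w ∈ Icc 0 B := fun t w => hin t _ (cl_mem hKp.le w)
  refine ⟨K, 2 * N + 1, 2 * F, L, hT, by positivity, hL, ?_, ?_, fun t w => GG_odd _ _ _ _ _, ?_, ?_,
    ?_, ?_, ?_, ?_, ?_⟩
  · have hc : Continuous (cl K) := by unfold cl; fun_prop
    refine Continuous.sub ?_ ?_
    · exact hf_cont.comp (f := fun p : ℝ × ℝ => (p.1, pm p.1 + cl K p.2)) (by fun_prop)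
    · exact hf_cont.comp (f := fun p : ℝ × ℝ => (p.1, pm p.1 + cl K (-p.2))) (by fun_prop)
  · intro t w
    rw [GG, GG, pmT, hfT _ _ (hcl t w).1, hfT _ _ (hcl t (-w)).1]
  · intro t a b
    have h1 := (hflip t _ (hcl t a) _ (hcl t b)).trans (mul_le_mul_of_nonneg_left
      ((le_of_eq (by rw [add_sub_add_left_eq_sub])).trans (cl_lip K a b)) hN0)
    have h2 := (hflip t _ (hcl t (-a)) _ (hcl t (-b))).trans (mul_le_mul_of_nonneg_left
      ((le_of_eq (by rw [add_sub_add_left_eq_sub])).trans (cl_lip K (-a) (-b))) hN0)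
    rw [show -a - -b = -(a - b) by ring, abs_neg] at h2
    rw [GG, GG]
    have h3 := abs_nonneg (a - b)
    have h1' := abs_le.1 h1
    have h2' := abs_le.1 h2
    rw [abs_le]
    constructor <;> linarith [h1'.1, h1'.2, h2'.1, h2'.2]
  · intro t w
    rw [GG]
    exact (abs_sub _ _).trans (by linarith [hF t _ (hcl t w), hF t _ (hcl t (-w))])
  · refine ⟨fun t a => deriv (f t) (pm t + |a|), fun t a b ha hb => ?_⟩
    have hl : ∀ r ∈ Icc 0 K, ∀ s ∈ Icc 0 K,
        |deriv (f t) (pm t + r) - deriv (f t) (pm t + s)| ≤ L * |r - s| := by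
      intro r hr s hs
      have := hLip t _ (hin t r hr) _ (hin t s hs)
      rwa [add_sub_add_left_eq_sub] at this
    refine odd_taylor (γ := GG f pm K t) (ψ' := fun r => deriv (f t) (pm t + r)) hL
      (GG_odd f pm K t) ?_ hl ha hb
    intro r hr s hs
    rw [GG_pos hr.1 hr.2, GG_pos hs.1 hs.2]
    have := taylor1 (ψ := fun r => f t (pm t + r)) hL
      (fun r => HasDerivAt.comp_const_add (pm t) r (hfd t (pm t + r))) hl hr hs
    rwa [sub_sub_sub_cancel_right]
  · intro t; simp only [pmT, ppT]
  · intro t; exact sub_pos.2 (hlt t)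
  · exact ht1
  · intro t
    rw [GG_pos (sub_pos.2 (hlt t)).le (ht1 t), add_sub_cancel]
    exact (ppo t (mem_univ t)).sub (pmo t (mem_univ t))

theorem dirichlet_periodic_solution_exists
    (T : ℝ) (hT : 0 < T) (f : ℝ → ℝ → ℝ)
    (hf_cont : Continuous fun q : ℝ × ℝ => f q.1 q.2)
    (hf_C1 : ∀ t, ContDiff ℝ 1 (f t))
    (hfT : ∀ t v : ℝ, 0 ≤ v → f (t + T) v = f t v)
    (hfLip : ∀ K : ℝ, ∃ L : ℝ, ∀ t : ℝ, ∀ v ∈ Set.Icc (0:ℝ) K, ∀ w ∈ Set.Icc (0:ℝ) K,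
      |deriv (f t) v - deriv (f t) w| ≤ L * |v - w|)
    (pm pp : ℝ → ℝ) (hpm : XPer T f pm) (hpp : XPer T f pp) (hlt : ∀ t, pm t < pp t)
    (hbasin : ∀ a ∈ Set.Ioo (pm 0) (pp 0), ∀ g : ℝ → ℝ,
      ODESolOn f g (Set.Ici 0) → g 0 = a →
        (∀ t : ℝ, 0 ≤ t → StrictMono fun m : ℕ => g (t + (m : ℝ) * T)) ∧
        TendstoLocallyUniformly (fun (m : ℕ) (t : ℝ) => g (t + (m : ℝ) * T)) pp atTop) :
    ∃ R₀ > (0:ℝ), ∀ R : ℝ, R₀ ≤ R →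
      ∃ φ : ℝ → ℝ → ℝ,
        SatPDE f φ (Set.Ioo (-R) R) Set.univ ∧
        ContinuousOn (fun q : ℝ × ℝ => φ q.1 q.2) (Set.Icc (-R) R ×ˢ Set.univ) ∧
        (∀ x t, φ x (t + T) = φ x t) ∧
        (∀ x ∈ Set.Ioo (-R) R, ∀ t : ℝ, pm t < φ x t ∧ φ x t < pp t) ∧
        (∀ t : ℝ, φ R t = pm t ∧ φ (-R) t = pm t) ∧
        (∀ x t, φ (-x) t = φ x t) ∧
        (∀ x ∈ Set.Ioo (0:ℝ) R, ∀ t : ℝ, deriv (fun y => φ y t) x < 0) := by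
  obtain ⟨K, Λ, M0, Cg, hG⟩ := GG_GH T hT f hf_cont hf_C1 hfT hfLip pm pp hpm hpp hlt
  obtain ⟨pm0, pmT, pmo⟩ := hpm
  have cm : Continuous pm := continuous_iff_continuousAt.2 fun t => (pmo t (mem_univ t)).continuousAt
  have hz : GS (GG f pm K) (fun _ => 0) := by
    intro t
    rw [GG_pos le_rfl ((hG.qpos t).le.trans (hG.qK t)), add_zero, sub_self]
    exact hasDerivAt_const _ _
  obtain ⟨R₀, hR₀, hex⟩ := abstract_exists hG (by
    intro y hy h0 h1 t ht
    have l1 := gs_lt hG hz hy h0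
    have l2 := gs_lt hG hy hG.qode h1
    have hsol : ODESolOn f (fun t => pm t + y t) (Ici 0) := by
      intro s _
      have := (pmo s (mem_univ s)).add (hy s)
      rw [GG_pos (l1 s).le ((l2 s).le.trans (hG.qK s)), add_sub_cancel] at this
      exact this
    have := (hbasin (pm 0 + y 0) ⟨by linarith, by linarith⟩ _ hsol rfl).1 t ht
      (by norm_num : (0:ℕ) < 1)
    simp only [Nat.cast_zero, Nat.cast_one, zero_mul, one_mul, add_zero, pmT] at this
    linarith)
  refine ⟨R₀, hR₀, fun R hR => ?_⟩
  obtain ⟨u, ux, uxx, hc, hp, he, hb, hr, hneg, hx, hxx, ht⟩ := hex R hR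
  have hφx : ∀ x t, HasDerivAt (fun y => pm t + u y t) (ux x t) x := fun x t =>
    (hx x t).const_add (pm t)
  have hφd : ∀ t, (deriv fun y => pm t + u y t) = fun x => ux x t := fun t =>
    funext fun x => (hφx x t).deriv
  refine ⟨fun x t => pm t + u x t, ?_, ?_, ?_, ?_, ?_, ?_, ?_⟩
  · intro x hxR t _
    simp only [hφd]
    refine ⟨(hφx x t).differentiableAt, (hxx x t).differentiableAt, ?_⟩
    rw [(hxx x t).deriv]
    have h1 := hr x hxR t
    have := (pmo t (mem_univ t)).add (ht x t)
    rw [GG_pos h1.1.le (h1.2.le.trans (hG.qK t))] at this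
    exact this.congr_deriv (by ring)
  · exact (by fun_prop : Continuous fun q : ℝ × ℝ => pm q.2 + u q.1 q.2).continuousOn
  · intro x t; simp only [pmT, hp]
  · intro x hxR t
    have := hr x hxR t
    exact ⟨by linarith, by linarith⟩
  · intro t
    simp only [(hb t).1, (hb t).2, add_zero, and_self]
  · intro x t; simp only [he]
  · intro x hx0 t
    rw [hφd]; exact hneg x hx0 t
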